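/- arXiv:1104.2547 — 10 statements merged into one kernel-verified Lean document; each statement's English description precedes it below -/
import Mathlib

section
/- Let n ≥ 2 and let F₀,…,F_{2n−1} be a bipyramidal perfect one-factorization (bipyramidal P1F) of G_{2n+2} such that the edge {0,∞₁} belongs to F₀, and let r ∈ Z_{2n} be the vertex matched with ∞₂ in F₀. Set C₀ = F₀ \ {{0,∞₁},{r,∞₂}} (so C₀ is a set of n−1 unordered pairs of elements of Z_{2n}). Then C₀ is a set of n−1 pairwise disjoint unordered pairs of nonzero elements of Z_{2n} and C₀ defines a C-code of length 2n: setting C_i = {{x+i, y+i} : {x,y} ∈ C₀} for i ∈ Z_{2n}, for all m ≠ k in Z_{2n} one has C_m ∩ C_k = ∅, the simple graph on vertex set Z_{2n} with edge set C_m ∪ C_k contains no cycle, and the vertices m and k lie in different connected components of that graph. -/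
/-! Common definitions: C-codes, even starters, even 2-starters,
and bipyramidal (perfect) one-factorizations of the graph `G_{2n+2}`. -/

/-- Translate each unordered pair in `C` by `i`. -/
def shiftSet {m : ℕ} (i : ZMod m) (C : Set (Sym2 (ZMod m))) : Set (Sym2 (ZMod m)) :=
  (Sym2.map (· + i)) '' C

/-- `C` consists of `k` pairwise disjoint unordered pairs (2-element sets) of nonzero
elements of `ZMod m`. -/
def IsPairing (m k : ℕ) (C : Set (Sym2 (ZMod m))) : Prop :=
  C.ncard = k ∧ (∀ e ∈ C, ¬ e.IsDiag) ∧ (∀ e ∈ C, (0 : ZMod m) ∉ e) ∧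
    (∀ e ∈ C, ∀ e' ∈ C, e ≠ e' → ∀ a, a ∈ e → a ∉ e')

/-- The defining condition of a C-code with columns `C_i = i + C0`:
for all `a ≠ b`, the columns `C_a` and `C_b` are disjoint, the graph on `ZMod m`
with edge set `C_a ∪ C_b` has no cycle, and `a`, `b` are in different components. -/
def CCodeCond (m : ℕ) (C0 : Set (Sym2 (ZMod m))) : Prop :=
  ∀ a b : ZMod m, a ≠ b →
    shiftSet a C0 ∩ shiftSet b C0 = ∅ ∧
    (SimpleGraph.fromEdgeSet (shiftSet a C0 ∪ shiftSet b C0)).IsAcyclic ∧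
    ¬ (SimpleGraph.fromEdgeSet (shiftSet a C0 ∪ shiftSet b C0)).Reachable a b

/-- `C0` defines a C-code of length `2n`. -/
def IsCCode (n : ℕ) (C0 : Set (Sym2 (ZMod (2*n)))) : Prop :=
  IsPairing (2*n) (n-1) C0 ∧ CCodeCond (2*n) C0

/-- An even starter in `ZMod (2n)`. -/
def IsEvenStarter (n : ℕ) (S : Set (Sym2 (ZMod (2*n)))) : Prop :=
  IsPairing (2*n) (n-1) S ∧
  ∀ i : ZMod (2*n), i ≠ 0 → i ≠ (n : ZMod (2*n)) →
    ∃ x y : ZMod (2*n), s(x, y) ∈ S ∧ (i = x - y ∨ i = y - x)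

/-- An even starter in `ZMod m` for even `m`, phrased with `n = m / 2`. -/
def IsEvenStarterMod (m : ℕ) (S : Set (Sym2 (ZMod m))) : Prop :=
  IsPairing m (m / 2 - 1) S ∧
  ∀ i : ZMod m, i ≠ 0 → i ≠ ((m / 2 : ℕ) : ZMod m) →
    ∃ x y : ZMod m, s(x, y) ∈ S ∧ (i = x - y ∨ i = y - x)

/-- Vertices of `G_{2n+2}`: `Sum.inl i` for `i ∈ ZMod (2n)`, and `Sum.inr false = ∞₁`,
`Sum.inr true = ∞₂`. -/
abbrev Vtx (n : ℕ) : Type := ZMod (2*n) ⊕ Bool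

/-- The graph `G_{2n+2}`: all pairs of distinct vertices are adjacent except
`{∞₁, ∞₂}` and the pairs `{i, i+n}` for `i ∈ ZMod (2n)`. -/
def Ggraph (n : ℕ) : SimpleGraph (Vtx n) :=
  SimpleGraph.fromRel fun u v =>
    match u, v with
    | Sum.inl i, Sum.inl j => j ≠ i + (n : ZMod (2*n))
    | Sum.inl _, Sum.inr _ => True
    | Sum.inr _, Sum.inl _ => True
    | Sum.inr _, Sum.inr _ => False

/-- The permutation `σ^i` (rotation by `i` on `ZMod (2n)`, fixing `∞₁` and `∞₂`). -/
def vshift (n : ℕ) (i : ZMod (2*n)) : Vtx n → Vtx n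
  | Sum.inl x => Sum.inl (x + i)
  | Sum.inr b => Sum.inr b

/-- The involution swapping `∞₁` and `∞₂` and fixing all elements of `ZMod (2n)`. -/
def iotaSwap (n : ℕ) : Vtx n → Vtx n
  | Sum.inl x => Sum.inl x
  | Sum.inr b => Sum.inr (!b)

/-- `F` is a perfect matching (one-factor) of `G_{2n+2}`. -/
def IsOneFactor (n : ℕ) (F : Set (Sym2 (Vtx n))) : Prop :=
  F ⊆ (Ggraph n).edgeSet ∧ ∀ v : Vtx n, ∃! e, e ∈ F ∧ v ∈ e

/-- A bipyramidal one-factorization of `G_{2n+2}`: `2n` pairwise edge-disjoint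
one-factors whose union is the whole edge set, with `F i = σ^i (F 0)`. -/
def IsBipyramidalOF (n : ℕ) (F : ZMod (2*n) → Set (Sym2 (Vtx n))) : Prop :=
  (∀ i, IsOneFactor n (F i)) ∧ (∀ i j, i ≠ j → F i ∩ F j = ∅) ∧
    (⋃ i, F i) = (Ggraph n).edgeSet ∧
    ∀ i, F i = (Sym2.map (vshift n i)) '' (F 0)

/-- The graph with edge set `E` is a Hamiltonian cycle: it is connected and every
vertex has degree 2. -/
def IsHamCycleOn {V : Type} (E : Set (Sym2 V)) : Prop :=
  (SimpleGraph.fromEdgeSet E).Connected ∧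
    ∀ v : V, ((SimpleGraph.fromEdgeSet E).neighborSet v).ncard = 2

/-- A bipyramidal perfect one-factorization of `G_{2n+2}`. -/
def IsBipyramidalP1F (n : ℕ) (F : ZMod (2*n) → Set (Sym2 (Vtx n))) : Prop :=
  IsBipyramidalOF n F ∧ ∀ j k, j ≠ k → IsHamCycleOn (F j ∪ F k)

/-- An even starter in the multiplicative group `(ZMod p)ˣ`. -/
def IsMulEvenStarter (p : ℕ) (S : Set (Sym2 ((ZMod p)ˣ))) : Prop :=
  S.ncard = (p - 3) / 2 ∧ (∀ e ∈ S, ¬ e.IsDiag) ∧ (∀ e ∈ S, (1 : (ZMod p)ˣ) ∉ e) ∧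
    (∀ e ∈ S, ∀ e' ∈ S, e ≠ e' → ∀ a, a ∈ e → a ∉ e') ∧
    ∀ u : (ZMod p)ˣ, u ≠ 1 → u ≠ -1 →
      ∃ x y : (ZMod p)ˣ, s(x, y) ∈ S ∧ (u = x⁻¹ * y ∨ u = x * y⁻¹)

/-- The number of pairs in `S` whose difference (in either order) is `d`. -/
noncomputable def diffCount (m : ℕ) (d : ℕ) (S : Set (Sym2 (ZMod m))) : ℕ :=
  {e ∈ S | ∃ x y : ZMod m, e = s(x, y) ∧
    (y - x = (d : ZMod m) ∨ x - y = (d : ZMod m))}.ncard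

/-- `(S0, S1)` is an even 2-starter in `ZMod (2n)`: each `Sᵢ` consists of `n-1`
unordered pairs of elements of `ZMod (2n) \ {i}`, and every `d` with `1 ≤ d ≤ n-1`
occurs exactly twice as a difference of a pair, counted over both sets. -/
def IsEven2Starter (n : ℕ) (S0 S1 : Set (Sym2 (ZMod (2*n)))) : Prop :=
  S0.ncard = n - 1 ∧ S1.ncard = n - 1 ∧
    (∀ e ∈ S0, ¬ e.IsDiag) ∧ (∀ e ∈ S1, ¬ e.IsDiag) ∧
    (∀ e ∈ S0, (0 : ZMod (2*n)) ∉ e) ∧ (∀ e ∈ S1, (1 : ZMod (2*n)) ∉ e) ∧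
    ∀ d : ℕ, 1 ≤ d → d ≤ n - 1 →
      diffCount (2*n) d S0 + diffCount (2*n) d S1 = 2

/-- The `i`-th column induced by `(S0, S1)`:
`C_i = {{x + 2⌊ī/2⌋, y + 2⌊ī/2⌋} : {x,y} ∈ S_{ī mod 2}}` where `ī = i.val`. -/
def qCol (n : ℕ) (S0 S1 : Set (Sym2 (ZMod (2*n)))) (i : ZMod (2*n)) :
    Set (Sym2 (ZMod (2*n))) :=
  (Sym2.map (· + ((2 * (i.val / 2) : ℕ) : ZMod (2*n)))) ''
    (if i.val % 2 = 0 then S0 else S1)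

/-- The quasi-C-code condition for the column family induced by `(S0, S1)`. -/
def QuasiCCodeCond (n : ℕ) (S0 S1 : Set (Sym2 (ZMod (2*n)))) : Prop :=
  ∀ a b : ZMod (2*n), a ≠ b →
    qCol n S0 S1 a ∩ qCol n S0 S1 b = ∅ ∧
    (SimpleGraph.fromEdgeSet (qCol n S0 S1 a ∪ qCol n S0 S1 b)).IsAcyclic ∧
    ¬ (SimpleGraph.fromEdgeSet (qCol n S0 S1 a ∪ qCol n S0 S1 b)).Reachable a b
lemma ham_cycle_support {V : Type} (H : SimpleGraph V) (hc : H.Connected)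
    (h2 : ∀ v, (H.neighborSet v).ncard = 2) {u : V} (c : H.Walk u u) (hcy : c.IsCycle)
    (w : V) : w ∈ c.support := by
  have hcl : ∀ x y, H.Adj x y → x ∈ c.support → y ∈ c.support := by
    intro x y hxy hx
    have e1 := hcy.ncard_neighborSet_toSubgraph_eq_two hx
    have hsub : c.toSubgraph.neighborSet x ⊆ H.neighborSet x := c.toSubgraph.neighborSet_subset x
    have hfin : (H.neighborSet x).Finite := Set.finite_of_ncard_ne_zero (by rw [h2]; norm_num)
    have heq := Set.eq_of_subset_of_ncard_le hsub (by rw [e1, h2]) hfin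
    have hy : y ∈ c.toSubgraph.neighborSet x := by rw [heq]; exact hxy
    have := c.toSubgraph.edge_vert (c.toSubgraph.adj_symm hy)
    simpa using this
  obtain ⟨p⟩ := hc.preconnected u w
  have key : ∀ {x y : V} (q : H.Walk x y), x ∈ c.support → y ∈ c.support := by
    intro x y q
    induction q with
    | nil => exact id
    | cons h q ih => exact fun hx => ih (hcl _ _ h hx)
  exact key p c.start_mem_support

lemma oneFactor_unique {n : ℕ} {F : Set (Sym2 (Vtx n))} (hF : IsOneFactor n F)
    {e e' : Sym2 (Vtx n)} (he : e ∈ F) (he' : e' ∈ F) {v : Vtx n} (hv : v ∈ e) (hv' : v ∈ e') :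
    e = e' :=
  (hF.2 v).unique ⟨he, hv⟩ ⟨he', hv'⟩

lemma oneFactor_ncard {n : ℕ} (hn : 2 ≤ n) {F : Set (Sym2 (Vtx n))} (hF : IsOneFactor n F) :
    F.ncard = n + 1 := by
  classical
  haveI : NeZero (2*n) := ⟨by omega⟩
  have hfin : F.Finite := Set.toFinite F
  have h1 : (hfin.toFinset.biUnion Sym2.toFinset) = Finset.univ := by
    ext v
    simp only [Finset.mem_biUnion, Set.Finite.mem_toFinset, Sym2.mem_toFinset, Finset.mem_univ,
      iff_true]
    exact (hF.2 v).exists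
  have h2 : (hfin.toFinset.biUnion Sym2.toFinset).card = ∑ e ∈ hfin.toFinset, e.toFinset.card := by
    apply Finset.card_biUnion
    intro e he e' he' hne
    refine Finset.disjoint_left.2 ?_
    intro v hv hv'
    rw [Sym2.mem_toFinset] at hv hv'
    exact hne (oneFactor_unique hF (by simpa using he) (by simpa using he') hv hv')
  have h3 : ∑ e ∈ hfin.toFinset, e.toFinset.card = ∑ e ∈ hfin.toFinset, 2 := by
    apply Finset.sum_congr rfl
    intro e he
    apply Sym2.card_toFinset_of_not_isDiag
    exact (Ggraph n).not_isDiag_of_mem_edgeSet (hF.1 (by simpa using he))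
  rw [h1, h3, Finset.sum_const, Finset.card_univ, Fintype.card_sum, ZMod.card,
    Fintype.card_bool, smul_eq_mul] at h2
  rw [Set.ncard_eq_toFinset_card F hfin]
  omega

/-- From a bipyramidal P1F of `G_{2n+2}` with `{0,∞₁} ∈ F 0` and
`{r,∞₂} ∈ F 0`, the set `C0` with `C0` (viewed inside the vertex set) equal to
`F 0 \ {{0,∞₁},{r,∞₂}}` defines a C-code of length `2n`. -/
theorem stmt0 (n : ℕ) (hn : 2 ≤ n)
    (F : ZMod (2*n) → Set (Sym2 (Vtx n)))
    (hF : IsBipyramidalP1F n F)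
    (h1 : s((Sum.inl (0 : ZMod (2*n)) : Vtx n), Sum.inr false) ∈ F 0)
    (r : ZMod (2*n))
    (h2 : s((Sum.inl r : Vtx n), Sum.inr true) ∈ F 0)
    (C0 : Set (Sym2 (ZMod (2*n))))
    (hC0 : (Sym2.map (Sum.inl : ZMod (2*n) → Vtx n)) '' C0 =
      F 0 \ {s((Sum.inl (0 : ZMod (2*n)) : Vtx n), Sum.inr false),
             s((Sum.inl r : Vtx n), Sum.inr true)}) :
    IsCCode n C0 := by
  haveI : NeZero (2*n) := ⟨by omega⟩
  obtain ⟨⟨hfac, hdis, -, hsh⟩, hham⟩ := hF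
  have hinj : Function.Injective (Sym2.map (Sum.inl : ZMod (2*n) → Vtx n)) :=
    Sym2.map.injective Sum.inl_injective
  have hmem : ∀ e ∈ C0, Sym2.map (Sum.inl : ZMod (2*n) → Vtx n) e ∈ F 0 ∧
      Sym2.map (Sum.inl : ZMod (2*n) → Vtx n) e ≠ s(Sum.inl 0, Sum.inr false) := by
    intro e he
    have : Sym2.map (Sum.inl : ZMod (2*n) → Vtx n) e ∈
      (Sym2.map (Sum.inl : ZMod (2*n) → Vtx n)) '' C0 := ⟨e, he, rfl⟩
    rw [hC0] at this
    exact ⟨this.1, fun h => this.2 (Or.inl h)⟩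
  have hmm : ∀ (e : Sym2 (ZMod (2*n))) a, a ∈ e →
      (Sum.inl a : Vtx n) ∈ Sym2.map (Sum.inl : ZMod (2*n) → Vtx n) e := by
    intro e a ha
    exact Sym2.mem_map.2 ⟨a, ha, rfl⟩
  have hshift : ∀ a, ∀ e ∈ shiftSet a C0, Sym2.map (Sum.inl : ZMod (2*n) → Vtx n) e ∈ F a := by
    rintro a _ ⟨e, he, rfl⟩
    rw [hsh a]
    refine ⟨_, (hmem e he).1, ?_⟩
    rw [Sym2.map_map, Sym2.map_map]
    rfl
  refine ⟨⟨?_, ?_, ?_, ?_⟩, ?_⟩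
  · rw [← Set.ncard_image_of_injective C0 hinj, hC0, Set.ncard_sdiff (by
      rintro e (rfl | rfl) <;> assumption), oneFactor_ncard hn (hfac 0), Set.ncard_pair]
    · omega
    · simp
  · intro e he hd
    apply (Ggraph n).not_isDiag_of_mem_edgeSet ((hfac 0).1 (hmem e he).1)
    revert hd
    induction e with
    | _ x y => simp
  · intro e he h0
    exact (hmem e he).2 (oneFactor_unique (hfac 0) (hmem e he).1 h1 (hmm e 0 h0) (by simp))
  · intro e he e' he' hne a ha ha'
    exact hne (hinj (oneFactor_unique (hfac 0) (hmem e he).1 (hmem e' he').1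
      (hmm e a ha) (hmm e' a ha')))
  · intro a b hab
    obtain ⟨hconn, hdeg⟩ := hham a b hab
    set H := SimpleGraph.fromEdgeSet (F a ∪ F b) with hH
    set K := SimpleGraph.fromEdgeSet (shiftSet a C0 ∪ shiftSet b C0) with hK
    let f : K →g H := ⟨Sum.inl, by
      intro x y hxy
      rw [hK, SimpleGraph.fromEdgeSet_adj] at hxy
      rw [hH, SimpleGraph.fromEdgeSet_adj]
      refine ⟨?_, fun h => hxy.2 (Sum.inl_injective h)⟩
      rcases hxy.1 with h | h
      · exact Or.inl (hshift a _ h)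
      · exact Or.inr (hshift b _ h)⟩
    have hf : Function.Injective f := Sum.inl_injective
    have hns : ∀ {x y : ZMod (2*n)} (p : K.Walk x y) (t : Bool),
        (Sum.inr t : Vtx n) ∉ (p.map f).support := by
      intro x y p t h
      rw [SimpleGraph.Walk.support_map, List.mem_map] at h
      obtain ⟨z, -, hz⟩ := h
      exact Sum.inl_ne_inr hz
    have hinf : ∀ c, s((Sum.inl c : Vtx n), Sum.inr false) ∈ F c := by
      intro c
      rw [hsh c]
      refine ⟨_, h1, ?_⟩
      simp [vshift]
    refine ⟨?_, ?_, ?_⟩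
    · rw [Set.eq_empty_iff_forall_notMem]
      rintro e ⟨hea, heb⟩
      have : Sym2.map (Sum.inl : ZMod (2*n) → Vtx n) e ∈ F a ∩ F b :=
        ⟨hshift a e hea, hshift b e heb⟩
      rw [hdis a b hab] at this
      exact this
    · intro v c hc
      have hc' : (c.map f).IsCycle := (SimpleGraph.Walk.map_isCycle_iff_of_injective hf).2 hc
      exact hns c false (ham_cycle_support H hconn hdeg _ hc' _)
    · intro hr
      obtain ⟨p, hp⟩ := hr.exists_isPath
      have hp' : (p.map f).IsPath := SimpleGraph.Walk.map_isPath_of_injective hf hp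
      have hA : H.Adj (Sum.inr false) (f a) := by
        apply SimpleGraph.Adj.symm
        refine (SimpleGraph.fromEdgeSet_adj _).2 ?_
        exact ⟨Or.inl (hinf a), Sum.inl_ne_inr⟩
      have hB : H.Adj (f b) (Sum.inr false) := by
        refine (SimpleGraph.fromEdgeSet_adj _).2 ?_
        exact ⟨Or.inr (hinf b), Sum.inl_ne_inr⟩
      have hq : ((p.map f).concat hB).IsPath := hp'.concat (hns p false) hB
      have hcyc : (SimpleGraph.Walk.cons hA ((p.map f).concat hB)).IsCycle := by
        rw [SimpleGraph.Walk.cons_isCycle_iff]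
        refine ⟨hq, ?_⟩
        rw [SimpleGraph.Walk.edges_concat, List.concat_eq_append, List.mem_append]
        rintro (h | h)
        · exact hns p false (SimpleGraph.Walk.fst_mem_support_of_mem_edges _ h)
        · rw [List.mem_singleton, Sym2.eq_iff] at h
          rcases h with h | h
          · exact Sum.inr_ne_inl h.1
          · exact hab (hf h.2)
      have h := ham_cycle_support H hconn hdeg _ hcyc (Sum.inr true)
      rw [SimpleGraph.Walk.support_cons, SimpleGraph.Walk.support_concat] at h
      simp only [List.mem_cons, List.concat_eq_append, List.mem_append] at h
      rcases h with h | h | h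
      · simp at h
      · exact hns p true h
      · simp at h
end

section
/- Let n ≥ 2 and let C₀ be a set of n−1 pairwise disjoint unordered pairs of nonzero elements of Z_{2n} that defines a C-code of length 2n. Let r be the unique nonzero element of Z_{2n} occurring in no pair of C₀. Then no pair of C₀ has difference n, and the sets F_i = {{x+i, y+i} : {x,y} ∈ C₀} ∪ {{i,∞₁},{i+r,∞₂}} for i ∈ Z_{2n} form a bipyramidal perfect one-factorization (bipyramidal P1F) of G_{2n+2}: each F_i is a perfect matching of G_{2n+2}, the F_i are pairwise edge-disjoint with union the entire edge set of G_{2n+2}, F_i = σ^i(F₀) for all i, and for all j ≠ k the graph with edge set F_j ∪ F_k is connected with every vertex of degree 2. -/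
theorem aux_mem_shift {m : ℕ} (i x y : ZMod m) (C : Set (Sym2 (ZMod m))) :
    s(x, y) ∈ shiftSet i C ↔ s(x - i, y - i) ∈ C := by
  unfold shiftSet
  constructor
  · rintro ⟨e, he, h⟩
    induction e using Sym2.ind with
    | _ a b =>
      simp only [Sym2.map_mk, Sym2.eq_iff] at h
      rcases h with ⟨rfl, rfl⟩ | ⟨rfl, rfl⟩
      · simpa using he
      · rw [Sym2.eq_swap]; simpa using he
  · intro h
    exact ⟨_, h, by simp⟩

theorem aux_cover {n : ℕ} (hn : 2 ≤ n) (C0 : Set (Sym2 (ZMod (2*n))))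
    (hP : IsPairing (2*n) (n-1) C0) (r : ZMod (2*n)) (hr0 : r ≠ 0) (hr1 : ∀ e ∈ C0, r ∉ e)
    (x : ZMod (2*n)) (hx0 : x ≠ 0) (hxr : x ≠ r) : ∃ y, s(x, y) ∈ C0 := by
  classical
  have : NeZero (2*n) := ⟨by omega⟩
  obtain ⟨h1, h2, h3, h4⟩ := hP
  have hfin : C0.Finite := Set.toFinite _
  set S := hfin.toFinset with hS
  have hSc : S.card = n - 1 := by rw [← h1, Set.ncard_eq_toFinset_card _ hfin]
  have hcard : (S.biUnion (fun e => e.toFinset)).card = 2 * (n - 1) := by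
    rw [Finset.card_biUnion]
    · rw [Finset.sum_congr rfl (g := fun _ => 2)]
      · simp [hSc, mul_comm]
      · intro e he
        exact Sym2.card_toFinset_of_not_isDiag e (h2 e (by simpa [hS] using he))
    · intro e he e' he' hne
      rw [Function.onFun, Finset.disjoint_left]
      intro a ha ha'
      exact h4 e (by simpa [hS] using he) e' (by simpa [hS] using he') hne a (by simpa using ha)
        (by simpa using ha')
  have hsub : S.biUnion (fun e => e.toFinset) ⊆ Finset.univ \ {0, r} := by
    intro a ha
    simp only [Finset.mem_biUnion, Sym2.mem_toFinset] at ha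
    obtain ⟨e, he, hae⟩ := ha
    have he : e ∈ C0 := by simpa [hS] using he
    simp only [Finset.mem_sdiff, Finset.mem_univ, true_and, Finset.mem_insert,
      Finset.mem_singleton, not_or]
    exact ⟨fun h => h3 e he (h ▸ hae), fun h => hr1 e he (h ▸ hae)⟩
  have heq := Finset.eq_of_subset_of_card_le hsub (by
    rw [hcard, Finset.card_sdiff_of_subset (Finset.subset_univ _), Finset.card_univ, ZMod.card,
      Finset.card_pair (Ne.symm hr0)]
    omega)
  have hx : x ∈ S.biUnion (fun e => e.toFinset) := by
    rw [heq]; simp [hx0, hxr]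
  simp only [Finset.mem_biUnion, Sym2.mem_toFinset] at hx
  obtain ⟨e, he, y, rfl⟩ := hx
  exact ⟨y, by simpa [hS] using he⟩

theorem aux_n_ne {n : ℕ} (hn : 2 ≤ n) : (n : ZMod (2*n)) ≠ 0 := by
  intro h
  rw [ZMod.natCast_eq_zero_iff] at h
  have := Nat.le_of_dvd (by omega) h
  omega

theorem aux_n_add {n : ℕ} : (n : ZMod (2*n)) + n = 0 := by
  have := ZMod.natCast_self (2*n)
  push_cast at this
  rw [← two_mul]; exact this

/-- disjointness in elementary form -/
theorem aux_disj {n : ℕ} {C0 : Set (Sym2 (ZMod (2*n)))} (hC : CCodeCond (2*n) C0)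
    {a b x y : ZMod (2*n)} (h1 : s(x - a, y - a) ∈ C0) (h2 : s(x - b, y - b) ∈ C0) : a = b := by
  by_contra hab
  have h := (hC a b hab).1
  have : s(x, y) ∈ shiftSet a C0 ∩ shiftSet b C0 :=
    ⟨(aux_mem_shift _ _ _ _).2 h1, (aux_mem_shift _ _ _ _).2 h2⟩
  rw [h] at this
  exact this

theorem aux_diff_ne {n : ℕ} (hn : 2 ≤ n) {C0 : Set (Sym2 (ZMod (2*n)))}
    (hC : CCodeCond (2*n) C0) (x y : ZMod (2*n)) (h : s(x, y) ∈ C0) :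
    y - x ≠ (n : ZMod (2*n)) := by
  intro hd
  have hy : y = x + n := by rw [← hd]; ring
  subst hy
  have hnn := aux_n_add (n := n)
  refine aux_n_ne hn (aux_disj hC (a := (n : ZMod (2*n))) (b := 0) (x := x) (y := x + n) ?_ ?_)
  · rw [Sym2.eq_swap]
    have e1 : x + n - n = x := by ring
    have e2 : x - (n : ZMod (2*n)) = x + n := by linear_combination -hnn
    rwa [e1, e2]
  · simpa using h

theorem aux_uniq {n : ℕ} {C0 : Set (Sym2 (ZMod (2*n)))}
    (hP : IsPairing (2*n) (n-1) C0) {x y z : ZMod (2*n)} (h1 : s(x, y) ∈ C0)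
    (h2 : s(x, z) ∈ C0) : y = z := by
  by_contra hne
  refine hP.2.2.2 _ h1 _ h2 ?_ x (by simp) (by simp)
  intro h
  simp only [Sym2.eq_iff] at h
  aesop

theorem aux_ne {n : ℕ} {C0 : Set (Sym2 (ZMod (2*n)))}
    (hP : IsPairing (2*n) (n-1) C0) {x y : ZMod (2*n)} (h1 : s(x, y) ∈ C0) : x ≠ y := by
  intro h
  exact hP.2.1 _ h1 (by simpa using h)

/-- Every difference other than `0, n` occurs. -/
theorem aux_diff_surj {n : ℕ} (hn : 2 ≤ n) (C0 : Set (Sym2 (ZMod (2*n)))) (hC : IsCCode n C0)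
    (r : ZMod (2*n)) (hr0 : r ≠ 0) (hr1 : ∀ e ∈ C0, r ∉ e)
    (d : ZMod (2*n)) (hd0 : d ≠ 0) (hdn : d ≠ n) : ∃ x y, s(x, y) ∈ C0 ∧ y - x = d := by
  classical
  have : NeZero (2*n) := ⟨by omega⟩
  have hcov := aux_cover hn C0 hC.1 r hr0 hr1
  have hex : ∀ x, ∃ y, x ≠ 0 → x ≠ r → s(x, y) ∈ C0 := by
    intro x
    by_cases h : x ≠ 0 ∧ x ≠ r
    · obtain ⟨y, hy⟩ := hcov x h.1 h.2
      exact ⟨y, fun _ _ => hy⟩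
    · exact ⟨0, fun h1 h2 => absurd ⟨h1, h2⟩ h⟩
  choose p hp using hex
  have hs := Finset.surjOn_of_injOn_of_card_le
    (s := (Finset.univ \ {0, r} : Finset (ZMod (2*n))))
    (t := (Finset.univ \ {0, (n : ZMod (2*n))} : Finset (ZMod (2*n)))) (fun x => p x - x) ?_ ?_ ?_
  · have : d ∈ ((Finset.univ \ {0, (n : ZMod (2*n))} : Finset (ZMod (2*n))) : Set _) := by
      simp [hd0, hdn]
    obtain ⟨x, hx, hxd⟩ := hs this
    simp at hx
    exact ⟨x, p x, hp x hx.1 hx.2, hxd⟩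
  · intro x hx
    simp at hx
    have := hp x hx.1 hx.2
    simp only [Finset.coe_sdiff, Finset.coe_univ, Set.mem_sdiff, Set.mem_univ, true_and,
      Finset.coe_insert, Finset.coe_singleton, Set.mem_insert_iff, Set.mem_singleton_iff, not_or]
    exact ⟨fun h => aux_ne hC.1 this (sub_eq_zero.1 h).symm, aux_diff_ne hn hC.2 _ _ this⟩
  · intro x hx x' hx' h
    simp at hx hx' h
    have h1 := hp x hx.1 hx.2
    have h2 := hp x' hx'.1 hx'.2
    have := aux_disj hC.2 (a := 0) (b := x - x') (x := x) (y := p x) (by simpa using h1) (by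
      have e1 : x - (x - x') = x' := by ring
      have e2 : p x - (x - x') = p x' := by linear_combination h
      rwa [e1, e2])
    exact (sub_eq_zero.1 this.symm)
  · rw [Finset.card_sdiff_of_subset (Finset.subset_univ _),
      Finset.card_sdiff_of_subset (Finset.subset_univ _),
      Finset.card_pair (Ne.symm hr0), Finset.card_pair (Ne.symm (aux_n_ne hn))]

theorem aux_walk {V W : Type} {T : SimpleGraph V} {B : SimpleGraph W} {f : V → W}
    (h : ∀ x y, T.Adj x y → B.Reachable (f x) (f y)) {x y : V} (w : T.Walk x y) :
    B.Reachable (f x) (f y) := by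
  induction w with
  | nil => exact SimpleGraph.Reachable.refl _
  | cons h' p ih => exact (h _ _ h').trans ih

theorem aux_tree {n : ℕ} (hn : 2 ≤ n) (C0 : Set (Sym2 (ZMod (2*n)))) (hC : IsCCode n C0)
    (j k : ZMod (2*n)) (hjk : j ≠ k) :
    (SimpleGraph.fromEdgeSet (shiftSet j C0 ∪ shiftSet k C0) ⊔ SimpleGraph.edge j k).Connected := by
  classical
  have : NeZero (2*n) := ⟨by omega⟩
  obtain ⟨hdis, hac, hnr⟩ := hC.2 j k hjk
  have hac' := hac.sup_edge_of_not_reachable hnr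
  set H := SimpleGraph.fromEdgeSet (shiftSet j C0 ∪ shiftSet k C0) with hH
  obtain ⟨T, hle, -, hT⟩ :=
    (SimpleGraph.connected_top (V := ZMod (2*n))).exists_isTree_le_of_le_of_isAcyclic le_top hac'
  have hsc : ∀ i : ZMod (2*n), (shiftSet i C0).ncard = n - 1 := by
    intro i
    rw [shiftSet, Set.ncard_image_of_injective _ (Sym2.map.injective (add_left_injective i)),
      hC.1.1]
  have hnd : ∀ i : ZMod (2*n), ∀ e ∈ shiftSet i C0, ¬ e.IsDiag := by
    intro i e he
    induction e using Sym2.ind with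
    | _ a b =>
      rw [aux_mem_shift] at he
      have := aux_ne hC.1 he
      simpa using this
  have hHe : H.edgeSet = shiftSet j C0 ∪ shiftSet k C0 := by
    rw [hH, SimpleGraph.edgeSet_fromEdgeSet]
    ext e
    simp only [Set.mem_sdiff]
    constructor
    · exact fun h => h.1
    · intro h
      exact ⟨h, h.elim (hnd j e) (hnd k e)⟩
  have hHc : H.edgeSet.ncard = 2 * (n - 1) := by
    rw [hHe, Set.ncard_union_eq (Set.disjoint_iff_inter_eq_empty.2 hdis), hsc, hsc]
    ring
  have hcc : ∀ (G : SimpleGraph (ZMod (2*n))) [Fintype G.edgeSet],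
      G.edgeFinset.card = G.edgeSet.ncard := by
    intro G _
    rw [← SimpleGraph.coe_edgeFinset, Set.ncard_coe_finset]
  have h2 := SimpleGraph.card_edgeFinset_sup_edge H (fun h : H.Adj j k => hnr h.reachable) hjk
  have h3 := hT.card_edgeFinset
  rw [ZMod.card, hcc] at h3
  rw [hcc, hcc, hHc] at h2
  have h4 : (H ⊔ SimpleGraph.edge j k).edgeFinset = T.edgeFinset :=
    Finset.eq_of_subset_of_card_le (SimpleGraph.edgeFinset_subset_edgeFinset.2 hle)
      (by rw [hcc, hcc, h2]; omega)
  have h5 : H ⊔ SimpleGraph.edge j k = T := SimpleGraph.edgeFinset_inj.1 h4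
  rw [h5]
  exact hT.connected

/-- If `C0` defines a C-code of length `2n` and `r` is the nonzero
element occurring in no pair of `C0`, then no pair of `C0` has difference `n`, and the
sets `F i = (i + C0) ∪ {{i,∞₁},{i+r,∞₂}}` form a bipyramidal P1F of `G_{2n+2}`. -/
theorem stmt1 (n : ℕ) (hn : 2 ≤ n)
    (C0 : Set (Sym2 (ZMod (2*n)))) (hC : IsCCode n C0)
    (r : ZMod (2*n)) (hr0 : r ≠ 0) (hr1 : ∀ e ∈ C0, r ∉ e)
    (F : ZMod (2*n) → Set (Sym2 (Vtx n)))
    (hF : ∀ i, F i =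
      (Sym2.map (Sum.inl : ZMod (2*n) → Vtx n)) '' (shiftSet i C0) ∪
        {s((Sum.inl i : Vtx n), Sum.inr false),
         s((Sum.inl (i + r) : Vtx n), Sum.inr true)}) :
    (∀ x y : ZMod (2*n), s(x, y) ∈ C0 → y - x ≠ (n : ZMod (2*n))) ∧
    IsBipyramidalP1F n F := by

  obtain ⟨hP, hCC⟩ := hC
  have hll : ∀ i x y, s((Sum.inl x : Vtx n), Sum.inl y) ∈ F i ↔ s(x - i, y - i) ∈ C0 := by
    intro i x y
    rw [hF, ← aux_mem_shift]
    simp only [Set.mem_union, Set.mem_insert_iff, Set.mem_singleton_iff]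
    constructor
    · rintro (⟨e, he, h⟩ | h | h)
      · have : e = s(x, y) := Sym2.map.injective Sum.inl_injective (by simpa using h)
        exact this ▸ he
      · simp at h
      · simp at h
    · intro h
      exact Or.inl ⟨_, h, by simp⟩
  have hlf : ∀ i x, s((Sum.inl x : Vtx n), Sum.inr false) ∈ F i ↔ x = i := by
    intro i x
    rw [hF]
    simp only [Set.mem_union, Set.mem_insert_iff, Set.mem_singleton_iff]
    constructor
    · rintro (⟨e, he, h⟩ | h | h)
      · induction e using Sym2.ind with
        | _ a b => simp at h
      · simpa using h
      · simp at h
    · rintro rfl; simp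
  have hlt : ∀ i x, s((Sum.inl x : Vtx n), Sum.inr true) ∈ F i ↔ x = i + r := by
    intro i x
    rw [hF]
    simp only [Set.mem_union, Set.mem_insert_iff, Set.mem_singleton_iff]
    constructor
    · rintro (⟨e, he, h⟩ | h | h)
      · induction e using Sym2.ind with
        | _ a b => simp at h
      · simp at h
      · simpa using h
    · rintro rfl; simp
  have hrr : ∀ i a b, s((Sum.inr a : Vtx n), Sum.inr b) ∉ F i := by
    intro i a b
    rw [hF]
    simp only [Set.mem_union, Set.mem_insert_iff, Set.mem_singleton_iff]
    rintro (⟨e, he, h⟩ | h | h)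
    · induction e using Sym2.ind with
      | _ a b => simp at h
    · simp at h
    · simp at h
  have hrf : ∀ i x, s((Sum.inr false : Vtx n), Sum.inl x) ∈ F i ↔ x = i := by
    intro i x; rw [Sym2.eq_swap, hlf]
  have hrt : ∀ i x, s((Sum.inr true : Vtx n), Sum.inl x) ∈ F i ↔ x = i + r := by
    intro i x; rw [Sym2.eq_swap, hlt]
  have h0 : ∀ y, s(0, y) ∉ C0 := fun y h => hP.2.2.1 _ h (by simp)
  have hr : ∀ y, s(r, y) ∉ C0 := fun y h => hr1 _ h (by simp)
  have hirr : ∀ i v, s(v, v) ∉ F i := by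
    rintro i (x | b) h
    · rw [hll] at h; exact aux_ne hP h rfl
    · exact hrr _ _ _ h
  have hpart : ∀ i v, ∃ w, ∀ u, s(v, u) ∈ F i ↔ u = w := by
    rintro i (x | b)
    · by_cases hx0 : x = i
      · subst hx0
        refine ⟨Sum.inr false, ?_⟩
        rintro (y | (_ | _))
        · simp [hll, h0]
        · simp [hlf]
        · simpa [hlt] using hr0
      · by_cases hxr : x = i + r
        · subst hxr
          refine ⟨Sum.inr true, ?_⟩
          rintro (y | (_ | _))
          · simp [hll, hr]
          · simpa [hlf] using hr0
          · simp [hlt]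
        · obtain ⟨y, hy⟩ := aux_cover hn C0 hP r hr0 hr1 (x - i) (sub_ne_zero.2 hx0)
            (fun h => hxr (by rw [← h]; ring))
          refine ⟨Sum.inl (y + i), ?_⟩
          rintro (z | (_ | _))
          · rw [hll]
            constructor
            · intro h
              have := aux_uniq hP hy h
              rw [this]; simp
            · intro h
              have := Sum.inl_injective h
              subst this
              simpa using hy
          · simp [hlf, hx0]
          · simp [hlt, hxr]
    · cases b
      · refine ⟨Sum.inl i, ?_⟩
        rintro (y | b)
        · simp [hrf]
        · simp [hrr]
      · refine ⟨Sum.inl (i + r), ?_⟩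
        rintro (y | b)
        · simp [hrt]
        · simp [hrr]
  have hdisj : ∀ i j, i ≠ j → F i ∩ F j = ∅ := by
    intro i j hij
    rw [Set.eq_empty_iff_forall_notMem]
    rintro e ⟨h1, h2⟩
    induction e using Sym2.ind with
    | _ u v =>
      rcases u with x | (_ | _) <;> rcases v with y | (_ | _)
      · rw [hll] at h1 h2
        exact hij (aux_disj hCC h1 h2)
      · rw [hlf] at h1 h2; exact hij (h1 ▸ h2)
      · rw [hlt] at h1 h2; exact hij (by simpa using h1.symm.trans h2)
      · rw [hrf] at h1 h2; exact hij (h1 ▸ h2)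
      · exact hrr _ _ _ h1
      · exact hrr _ _ _ h1
      · rw [hrt] at h1 h2; exact hij (by simpa using h1.symm.trans h2)
      · exact hrr _ _ _ h1
      · exact hrr _ _ _ h1
  have hdn := aux_diff_ne hn hCC
  have hnn := aux_n_add (n := n)
  have hunion : (⋃ i, F i) = (Ggraph n).edgeSet := by
    ext e
    rw [Set.mem_iUnion]
    induction e using Sym2.ind with
    | _ u v =>
      rw [SimpleGraph.mem_edgeSet, Ggraph, SimpleGraph.fromRel_adj]
      rcases u with x | (_ | _) <;> rcases v with y | (_ | _)
      · constructor
        · rintro ⟨i, hi⟩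
          rw [hll] at hi
          refine ⟨fun h => aux_ne hP hi (by rw [Sum.inl_injective h]), Or.inl ?_⟩
          intro h
          refine hdn _ _ hi ?_
          rw [h]; ring
        · rintro ⟨hne, h⟩
          have hne : x ≠ y := fun h => hne (by rw [h])
          have hyx : y - x ≠ n := by
            intro h'
            rcases h with h | h
            · exact h (by rw [← h']; ring)
            · exact h (by linear_combination -h' - hnn)
          obtain ⟨a, b, hab, hd⟩ := aux_diff_surj hn C0 ⟨hP, hCC⟩ r hr0 hr1 (y - x)
            (sub_ne_zero.2 hne.symm) hyx
          refine ⟨x - a, ?_⟩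
          rw [hll]
          have e1 : x - (x - a) = a := by ring
          have e2 : y - (x - a) = b := by linear_combination -hd
          rwa [e1, e2]
      · simp [hlf]
      · simp only [hlt]
        simp only [ne_eq, reduceCtorEq, not_false_eq_true, or_self, and_self, iff_true]
        exact ⟨x - r, by ring⟩
      · simp [hrf]
      · simp [hrr]
      · simp [hrr]
      · simp only [hrt]
        simp only [ne_eq, reduceCtorEq, not_false_eq_true, or_self, and_self, iff_true]
        exact ⟨y - r, by ring⟩
      · simp [hrr]
      · simp [hrr]
  refine ⟨hdn, ⟨⟨?_, hdisj, hunion, ?_⟩, ?_⟩⟩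
  · intro i
    refine ⟨hunion ▸ Set.subset_iUnion F i, ?_⟩
    intro v
    obtain ⟨w, hw⟩ := hpart i v
    refine ⟨s(v, w), ⟨(hw w).2 rfl, by simp⟩, ?_⟩
    rintro e ⟨he, u, rfl⟩
    rw [(hw u).1 he]
  · intro i
    rw [hF i, hF 0]
    simp only [shiftSet, Set.image_union, Set.image_image, Sym2.map_map, Set.image_insert_eq,
      Set.image_singleton, Sym2.map_mk, vshift]
    congr 1
    · congr 1
      funext e
      congr 1
      funext x
      simp [vshift]
    · rw [zero_add, zero_add, add_comm r i]
  · intro j k hjk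
    have hadj : ∀ i v u, s(v, u) ∈ F i → (i = j ∨ i = k) →
        (SimpleGraph.fromEdgeSet (F j ∪ F k)).Adj v u := by
      intro i v u h hi
      rw [SimpleGraph.fromEdgeSet_adj]
      refine ⟨?_, fun h' => hirr i v (by rw [← h'] at h; exact h)⟩
      rcases hi with rfl | rfl
      · exact Or.inl h
      · exact Or.inr h
    constructor
    · set B := SimpleGraph.fromEdgeSet (F j ∪ F k) with hB
      have hT := aux_tree hn C0 ⟨hP, hCC⟩ j k hjk
      have hj : B.Reachable (Sum.inl j) (Sum.inr false) :=
        (hadj j _ _ ((hlf j j).2 rfl) (Or.inl rfl)).reachable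
      have hk : B.Reachable (Sum.inl k) (Sum.inr false) :=
        (hadj k _ _ ((hlf k k).2 rfl) (Or.inr rfl)).reachable
      have hjr : B.Reachable (Sum.inl (j + r)) (Sum.inr true) :=
        (hadj j _ _ ((hlt j _).2 rfl) (Or.inl rfl)).reachable
      have hstep : ∀ x y, (SimpleGraph.fromEdgeSet (shiftSet j C0 ∪ shiftSet k C0) ⊔
          SimpleGraph.edge j k).Adj x y → B.Reachable (Sum.inl x) (Sum.inl y) := by
        intro x y h
        rw [SimpleGraph.sup_adj, SimpleGraph.fromEdgeSet_adj, SimpleGraph.edge_adj] at h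
        rcases h with ⟨h | h, -⟩ | ⟨⟨rfl, rfl⟩ | ⟨rfl, rfl⟩, -⟩
        · exact (hadj j _ _ ((hll _ _ _).2 ((aux_mem_shift _ _ _ _).1 h)) (Or.inl rfl)).reachable
        · exact (hadj k _ _ ((hll _ _ _).2 ((aux_mem_shift _ _ _ _).1 h)) (Or.inr rfl)).reachable
        · exact hj.trans hk.symm
        · exact hk.trans hj.symm
      have hreach : ∀ x, B.Reachable (Sum.inl j) (Sum.inl x) := by
        intro x
        obtain ⟨w⟩ := hT.preconnected j x
        exact aux_walk hstep w
      have hall : ∀ v, B.Reachable (Sum.inl j) v := by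
        rintro (x | (_ | _))
        · exact hreach x
        · exact hj
        · exact (hreach _).trans hjr
      have : Nonempty (Vtx n) := ⟨Sum.inr true⟩
      exact SimpleGraph.Connected.mk (fun u v => (hall u).symm.trans (hall v))
    · intro v
      obtain ⟨a, ha⟩ := hpart j v
      obtain ⟨b, hb⟩ := hpart k v
      have hab : a ≠ b := by
        rintro rfl
        have : s(v, a) ∈ F j ∩ F k := ⟨(ha a).2 rfl, (hb a).2 rfl⟩
        rw [hdisj j k hjk] at this
        exact this
      have : (SimpleGraph.fromEdgeSet (F j ∪ F k)).neighborSet v = {a, b} := by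
        ext u
        rw [SimpleGraph.mem_neighborSet]
        simp only [Set.mem_insert_iff, Set.mem_singleton_iff]
        constructor
        · intro h
          rw [SimpleGraph.fromEdgeSet_adj] at h
          exact h.1.imp (ha u).1 (hb u).1
        · rintro (h | h)
          · exact hadj j v u ((ha u).2 h) (Or.inl rfl)
          · exact hadj k v u ((hb u).2 h) (Or.inr rfl)
      rw [this, Set.ncard_pair hab]
end

section
/- Let n ≥ 2 and let F₀,…,F_{2n−1} be a bipyramidal one-factorization (not necessarily perfect) of G_{2n+2} such that the edge {0,∞₁} belongs to F₀, and let r ∈ Z_{2n} be the vertex matched with ∞₂ in F₀. Then S = F₀ \ {{0,∞₁},{r,∞₂}} is an even starter in Z_{2n}: it is a set of n−1 pairwise disjoint unordered pairs of nonzero elements of Z_{2n}, and for every i ∈ Z_{2n} with i ≠ 0 and i ≠ n there is a pair {x,y} ∈ S with i = x−y or i = y−x. -/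
/-- From a bipyramidal one-factorization (not necessarily perfect) of
`G_{2n+2}` with `{0,∞₁} ∈ F 0` and `{r,∞₂} ∈ F 0`, the set
`S = F 0 \ {{0,∞₁},{r,∞₂}}` is an even starter in `ZMod (2n)`. -/
theorem stmt2 (n : ℕ) (hn : 2 ≤ n)
    (F : ZMod (2*n) → Set (Sym2 (Vtx n)))
    (hF : IsBipyramidalOF n F)
    (h1 : s((Sum.inl (0 : ZMod (2*n)) : Vtx n), Sum.inr false) ∈ F 0)
    (r : ZMod (2*n))
    (h2 : s((Sum.inl r : Vtx n), Sum.inr true) ∈ F 0)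
    (S : Set (Sym2 (ZMod (2*n))))
    (hS : (Sym2.map (Sum.inl : ZMod (2*n) → Vtx n)) '' S =
      F 0 \ {s((Sum.inl (0 : ZMod (2*n)) : Vtx n), Sum.inr false),
             s((Sum.inl r : Vtx n), Sum.inr true)}) :
    IsEvenStarter n S := by
  obtain ⟨hfac, -, hun, hsh⟩ := hF
  have : NeZero (2*n) := ⟨by omega⟩
  have hinj : Function.Injective (Sym2.map (Sum.inl : ZMod (2*n) → Vtx n)) :=
    Sym2.map.injective Sum.inl_injective
  have U : ∀ v : Vtx n, ∀ e ∈ F 0, ∀ e' ∈ F 0, v ∈ e → v ∈ e' → e = e' := by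
    intro v e he e' he' hv hv'
    exact ((hfac 0).2 v).unique ⟨he, hv⟩ ⟨he', hv'⟩
  have hSF : ∀ e ∈ S, Sym2.map (Sum.inl : ZMod (2*n) → Vtx n) e ∈ F 0 \
      {s((Sum.inl (0 : ZMod (2*n)) : Vtx n), Sum.inr false),
             s((Sum.inl r : Vtx n), Sum.inr true)} := by
    intro e he
    rw [← hS]
    exact ⟨e, he, rfl⟩
  have hr : r ≠ 0 := by
    rintro rfl
    have := U (Sum.inl 0) _ h1 _ h2 (by simp) (by simp)
    simp at this
  have hm : ∀ (a : ZMod (2*n)) (e : Sym2 (ZMod (2*n))), a ∈ e →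
      (Sum.inl a : Vtx n) ∈ Sym2.map (Sum.inl : ZMod (2*n) → Vtx n) e := by
    intro a e h
    exact Sym2.mem_map.2 ⟨a, h, rfl⟩
  have hz : ∀ e ∈ S, (0 : ZMod (2*n)) ∉ e := by
    intro e he h0
    have h := hSF e he
    exact h.2 (Or.inl (U (Sum.inl 0) _ h.1 _ h1 (hm _ _ h0) (by simp)))
  have hrr : ∀ e ∈ S, r ∉ e := by
    intro e he h0
    have h := hSF e he
    exact h.2 (Or.inr (U (Sum.inl r) _ h.1 _ h2 (hm _ _ h0) (by simp)))
  have hd : ∀ e ∈ S, ¬ e.IsDiag := by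
    intro e he hdg
    have h := (hfac 0).1 (hSF e he).1
    apply (Ggraph n).not_isDiag_of_mem_edgeSet h
    induction e with | _ x y =>
    simp at hdg
    simp [hdg]
  have hdis : ∀ e ∈ S, ∀ e' ∈ S, e ≠ e' → ∀ a, a ∈ e → a ∉ e' := by
    intro e he e' he' hne a ha ha'
    exact hne (hinj (U (Sum.inl a) _ (hSF e he).1 _ (hSF e' he').1 (hm _ _ ha) (hm _ _ ha')))
  have hcov : ∀ a : ZMod (2*n), a ≠ 0 → a ≠ r → ∃ e ∈ S, a ∈ e := by
    intro a ha0 har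
    obtain ⟨e, ⟨he, hae⟩, -⟩ := (hfac 0).2 (Sum.inl a)
    have : e ∈ (Sym2.map (Sum.inl : ZMod (2*n) → Vtx n)) '' S := by
      rw [hS]
      refine ⟨he, ?_⟩
      rintro (rfl | h)
      · simp [ha0] at hae
      · rw [Set.mem_singleton_iff] at h
        subst h
        simp [har] at hae
    obtain ⟨e', he', rfl⟩ := this
    obtain ⟨b, hb, hba⟩ := Sym2.mem_map.1 hae
    exact ⟨e', he', by rwa [← Sum.inl_injective hba]⟩
  refine ⟨⟨?_, hd, hz, hdis⟩, ?_⟩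
  · classical
    have hfin : S.Finite := Set.toFinite S
    have hc : (hfin.toFinset.biUnion Sym2.toFinset) = Finset.univ \ {0, r} := by
      ext a
      simp only [Finset.mem_biUnion, Set.Finite.mem_toFinset, Sym2.mem_toFinset,
        Finset.mem_sdiff, Finset.mem_univ, true_and, Finset.mem_insert, Finset.mem_singleton]
      constructor
      · rintro ⟨e, he, hae⟩ (rfl | rfl)
        · exact hz e he hae
        · exact hrr e he hae
      · intro h
        push Not at h
        exact hcov a h.1 h.2
    have hcard := congrArg Finset.card hc
    rw [Finset.card_biUnion, Finset.sum_congr rfl (g := fun _ => 2),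
      Finset.card_sdiff_of_subset (Finset.subset_univ _), Finset.card_pair hr.symm,
      Finset.card_univ, ZMod.card] at hcard
    · rw [Set.ncard_eq_toFinset_card S hfin]
      rw [Finset.sum_const, smul_eq_mul] at hcard
      omega
    · intro e he
      exact Sym2.card_toFinset_of_not_isDiag e (hd e (by simpa using he))
    · intro e he e' he' hne
      rw [Function.onFun, Finset.disjoint_left]
      intro a ha ha'
      rw [Sym2.mem_toFinset] at ha ha'
      exact hdis e (by simpa using he) e' (by simpa using he') hne a ha ha'
  · intro i hi hin
    have hG : s((Sum.inl i : Vtx n), Sum.inl 0) ∈ (Ggraph n).edgeSet := by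
      rw [SimpleGraph.mem_edgeSet, Ggraph, SimpleGraph.fromRel_adj]
      refine ⟨by simpa using hi, Or.inr ?_⟩
      simpa using hin
    rw [← hun] at hG
    obtain ⟨j, hj⟩ := Set.mem_iUnion.1 hG
    rw [hsh j] at hj
    obtain ⟨e, he, hej⟩ := hj
    have : e ∈ (Sym2.map (Sum.inl : ZMod (2*n) → Vtx n)) '' S := by
      rw [hS]
      refine ⟨he, ?_⟩
      rintro (rfl | h)
      · simp [vshift] at hej
      · rw [Set.mem_singleton_iff] at h
        subst h
        simp [vshift] at hej
    obtain ⟨e', he', rfl⟩ := this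
    induction e' with | _ x y =>
    refine ⟨x, y, he', ?_⟩
    simp [vshift] at hej
    rcases hej with ⟨h, h'⟩ | ⟨h, h'⟩
    · left; linear_combination h' - h
    · right; linear_combination h - h'
end

section
/- Let n ≥ 2 and let C₀ be a set of n−1 pairwise disjoint unordered pairs of nonzero elements of Z_{2n} that defines a C-code of length 2n. Then C₀ is an even starter in Z_{2n}: for every i ∈ Z_{2n} with i ≠ 0 and i ≠ n there is a pair {x,y} ∈ C₀ with i = x−y or i = y−x. -/
/-- Ordered pairs with the same difference coincide. -/
lemma diff_inj_aux {m : ℕ} {C0 : Set (Sym2 (ZMod m))} (h : CCodeCond m C0)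
    {x y x' y' : ZMod m} (h1 : s(x, y) ∈ C0) (h2 : s(x', y') ∈ C0)
    (hd : x - y = x' - y') : x = x' ∧ y = y' := by
  by_cases hx : x = x'
  · subst hx
    exact ⟨rfl, sub_right_injective hd⟩
  · exfalso
    have h3 := (h (x' - x) 0 (sub_ne_zero.mpr (Ne.symm hx))).1
    have : s(x', y') ∈ shiftSet (x' - x) C0 ∩ shiftSet 0 C0 := by
      refine ⟨⟨s(x, y), h1, ?_⟩, ⟨s(x', y'), h2, ?_⟩⟩
      · have e1 : x + (x' - x) = x' := by ring
        have e2 : y + (x' - x) = y' := by linear_combination -hd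
        simp only [Sym2.map_mk, e1, e2]
      · simp
    rw [h3] at this
    exact this

/-- Any set `C0` defining a C-code of length `2n` is an even starter
in `ZMod (2n)`. -/
theorem stmt3 (n : ℕ) (hn : 2 ≤ n)
    (C0 : Set (Sym2 (ZMod (2*n)))) (hC : IsCCode n C0) :
    IsEvenStarter n C0 := by
  obtain ⟨hP, hC⟩ := hC
  refine ⟨hP, ?_⟩
  obtain ⟨hcard, hdiag, -, -⟩ := hP
  have : NeZero (2*n) := ⟨by omega⟩
  classical
  have hnd : ∀ x y, s(x, y) ∈ C0 → x ≠ y := fun x y h he => hdiag _ h (by simpa using he)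
  have hnn : (n : ZMod (2*n)) + n = 0 := by
    have := ZMod.natCast_self (2*n)
    push_cast at this
    linear_combination this
  have hn0 : (n : ZMod (2*n)) ≠ 0 := by
    intro h
    rw [ZMod.natCast_eq_zero_iff] at h
    have := Nat.le_of_dvd (by omega) h
    omega
  let o : Sym2 (ZMod (2*n)) → ZMod (2*n) × ZMod (2*n) := fun e => Quot.out e
  have ho : ∀ e, s((o e).1, (o e).2) = e := fun e => Quot.out_eq e
  let p : Sym2 (ZMod (2*n)) × Bool → ZMod (2*n) × ZMod (2*n) :=
    fun q => if q.2 then o q.1 else (o q.1).swap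
  have hp : ∀ q, s((p q).1, (p q).2) = q.1 := by
    rintro ⟨e, b⟩
    cases b
    · simp only [p]
      rw [Sym2.eq_swap]
      exact ho e
    · exact ho e
  let F : Finset (Sym2 (ZMod (2*n)) × Bool) := C0.toFinset ×ˢ Finset.univ
  let f : Sym2 (ZMod (2*n)) × Bool → ZMod (2*n) := fun q => (p q).1 - (p q).2
  have hF : ∀ q ∈ F, s((p q).1, (p q).2) ∈ C0 := by
    intro q hq
    rw [hp]
    simpa [F] using hq
  have hinj : Set.InjOn f F := by
    intro q hq q' hq' h
    obtain ⟨a, b⟩ := diff_inj_aux hC (hF q hq) (hF q' hq') h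
    have h1 : q.1 = q'.1 := by rw [← hp q, ← hp q', a, b]
    have hne := hnd _ _ (hF q hq)
    obtain ⟨e, c⟩ := q
    obtain ⟨e', c'⟩ := q'
    simp only at h1
    subst h1
    cases c <;> cases c' <;> simp_all [p]
  have hsub : F.image f ⊆ Finset.univ \ {0, (n : ZMod (2*n))} := by
    intro i hi
    obtain ⟨q, hq, rfl⟩ := Finset.mem_image.mp hi
    have hne := hnd _ _ (hF q hq)
    simp only [Finset.mem_sdiff, Finset.mem_univ, true_and, Finset.mem_insert,
      Finset.mem_singleton, not_or]
    refine ⟨sub_ne_zero.mpr hne, fun h => ?_⟩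
    have h' : (p q).1 - (p q).2 = n := h
    have h2 := hF q hq
    rw [Sym2.eq_swap] at h2
    exact hne (diff_inj_aux hC (hF q hq) h2 (by linear_combination 2 * h' + hnn)).1
  have heq : F.image f = Finset.univ \ {0, (n : ZMod (2*n))} := by
    apply Finset.eq_of_subset_of_card_le hsub
    rw [Finset.card_image_of_injOn hinj, Finset.card_sdiff_of_subset (Finset.subset_univ _),
      Finset.card_pair hn0.symm, Finset.card_univ, ZMod.card, Finset.card_product,
      ← Set.ncard_eq_toFinset_card', hcard]
    simp
    omega
  intro i hi hin
  have : i ∈ F.image f := by rw [heq]; simp [hi, hin]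
  obtain ⟨q, hq, rfl⟩ := Finset.mem_image.mp this
  exact ⟨_, _, hF q hq, Or.inl rfl⟩
end

section
/- Let n ≥ 2 and let S be an even starter in Z_{2n} with missing element r. If S defines a C-code of length 2n, then its twin S^τ = {{x−r, y−r} : {x,y} ∈ S} also defines a C-code of length 2n. -/
theorem twin_even {m : ℕ} [NeZero m] (S : Finset (Sym2 (ZMod m)))
    (hd : ∀ e ∈ S, ¬ e.IsDiag)
    (hdis : ∀ e ∈ S, ∀ e' ∈ S, e ≠ e' → ∀ a, a ∈ e → a ∉ e')
    (Z : Finset (ZMod m)) (hZ : ∀ x y, s(x, y) ∈ S → (x ∈ Z ↔ y ∈ Z)) :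
    Even (S.biUnion (fun e => e.toFinset ∩ Z)).card := by
  classical
  rw [Finset.card_biUnion]
  · apply Finset.even_sum
    intro e he
    induction e using Sym2.ind with
    | _ x y =>
      have h := hZ x y he
      have hne : x ≠ y := by simpa using hd _ he
      by_cases hx : x ∈ Z
      · have hy := h.1 hx
        have : (s(x, y)).toFinset ∩ Z = {x, y} := by
          ext z; simp only [Finset.mem_inter, Sym2.mem_toFinset, Sym2.mem_iff,
            Finset.mem_insert, Finset.mem_singleton]
          constructor
          · exact fun h => h.1
          · rintro (rfl | rfl) <;> simp [*]
        rw [this, Finset.card_pair hne]; decide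
      · have hy : y ∉ Z := fun hy => hx (h.2 hy)
        have : (s(x, y)).toFinset ∩ Z = ∅ := by
          ext z; simp only [Finset.mem_inter, Sym2.mem_toFinset, Sym2.mem_iff]
          constructor
          · rintro ⟨rfl | rfl, h⟩ <;> contradiction
          · simp
        rw [this]; simp
  · intro e he e' he' hee
    rw [Function.onFun, Finset.disjoint_left]
    intro z hz hz'
    simp only [Finset.mem_inter, Sym2.mem_toFinset] at hz hz'
    exact hdis e he e' he' hee z hz.1 hz'.1

theorem twin_parity (n : ℕ) (hn : 2 ≤ n) (S : Set (Sym2 (ZMod (2*n))))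
    (hS : IsPairing (2*n) (n-1) S) (r : ZMod (2*n)) (hr0 : r ≠ 0) (hr1 : ∀ e ∈ S, r ∉ e)
    (Z : Finset (ZMod (2*n))) (hZ : ∀ x y, s(x, y) ∈ S → (x ∈ Z ↔ y ∈ Z)) :
    Even (Z.card + ({0, r} ∩ Z).card) := by
  classical
  have : NeZero (2*n) := ⟨by omega⟩
  obtain ⟨hc, hd, h0, hdis⟩ := hS
  obtain ⟨T, rfl⟩ : ∃ T : Finset (Sym2 (ZMod (2*n))), S = ↑T :=
    ⟨S.toFinite.toFinset, by simp⟩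
  simp only [Finset.mem_coe] at hd h0 hdis hr1 hZ
  rw [Set.ncard_coe_finset] at hc
  have hcov : (T.biUnion (fun e => e.toFinset)).card = 2 * (n - 1) := by
    rw [Finset.card_biUnion, Finset.sum_congr rfl
      (fun e he => Sym2.card_toFinset_of_not_isDiag e (hd e he))]
    · simp [hc, mul_comm]
    · intro e he e' he' hee
      rw [Function.onFun, Finset.disjoint_left]
      intro z hz hz'
      simp only [Sym2.mem_toFinset] at hz hz'
      exact hdis e he e' he' hee z hz hz'
  have hdj : Disjoint (T.biUnion (fun e => e.toFinset)) {0, r} := by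
    rw [Finset.disjoint_left]
    intro z hz hz'
    simp only [Finset.mem_biUnion, Sym2.mem_toFinset] at hz
    obtain ⟨e, he, hze⟩ := hz
    simp only [Finset.mem_insert, Finset.mem_singleton] at hz'
    rcases hz' with rfl | rfl
    · exact h0 e he hze
    · exact hr1 e he hze
  have huniv : T.biUnion (fun e => e.toFinset) ∪ {0, r} = Finset.univ := by
    rw [← Finset.card_eq_iff_eq_univ, Finset.card_union_of_disjoint hdj, hcov,
      Finset.card_pair hr0.symm, ZMod.card]
    omega
  have hZeq : Z = (T.biUnion (fun e => e.toFinset ∩ Z)) ∪ ({0, r} ∩ Z) := by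
    rw [← Finset.biUnion_inter, ← Finset.union_inter_distrib_right, huniv, Finset.univ_inter]
  have hcard : Z.card = (T.biUnion (fun e => e.toFinset ∩ Z)).card + ({0, r} ∩ Z).card := by
    conv_lhs => rw [hZeq]
    apply Finset.card_union_of_disjoint
    rw [← Finset.biUnion_inter]
    exact hdj.mono Finset.inter_subset_left Finset.inter_subset_left
  have := twin_even T hd hdis Z hZ
  rw [hcard, add_assoc]
  exact this.add ⟨_, rfl⟩

theorem shiftSet_twin {m : ℕ} (S : Set (Sym2 (ZMod m))) (r a : ZMod m) :
    shiftSet a ((Sym2.map (· - r)) '' S) = shiftSet (a - r) S := by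
  unfold shiftSet
  rw [Set.image_image]
  congr 1
  funext e
  rw [Sym2.map_map]
  congr 1
  funext x
  simp only [Function.comp]
  ring

theorem twin_card_pair {α : Type*} [DecidableEq α] (x y : α) (h : x ≠ y) (Z : Finset α) :
    (({x, y} : Finset α) ∩ Z).card = (if x ∈ Z then 1 else 0) + (if y ∈ Z then 1 else 0) := by
  by_cases hx : x ∈ Z <;> by_cases hy : y ∈ Z <;>
    simp [Finset.insert_inter_of_mem, Finset.insert_inter_of_notMem, hx, hy, h]

theorem twin_reach (n : ℕ) (hn : 2 ≤ n) (S : Set (Sym2 (ZMod (2*n))))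
    (hS : IsPairing (2*n) (n-1) S) (r : ZMod (2*n)) (hr0 : r ≠ 0) (hr1 : ∀ e ∈ S, r ∉ e)
    (a b : ZMod (2*n))
    (h : ¬ (SimpleGraph.fromEdgeSet (shiftSet a S ∪ shiftSet b S)).Reachable a b) :
    ¬ (SimpleGraph.fromEdgeSet (shiftSet a S ∪ shiftSet b S)).Reachable (r + a) (r + b) := by
  classical
  have : NeZero (2*n) := ⟨by omega⟩
  set G := SimpleGraph.fromEdgeSet (shiftSet a S ∪ shiftSet b S) with hG
  intro hab
  let Z : ZMod (2*n) → Finset (ZMod (2*n)) := fun c =>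
    Finset.univ.filter (fun x => G.Reachable a (x + c))
  have hmem : ∀ c x, x ∈ Z c ↔ G.Reachable a (x + c) := by intro c x; simp [Z]
  have hcard : ∀ c, (Z c).card = (Z 0).card := by
    intro c
    apply Finset.card_bij (fun x _ => x + c)
    · intro x hx; rw [hmem] at hx ⊢; simpa using hx
    · intro x _ y _ hxy; exact add_right_cancel hxy
    · intro y hy
      refine ⟨y - c, ?_, by ring⟩
      rw [hmem] at hy ⊢; simpa using hy
  have key : ∀ c, shiftSet c S ⊆ shiftSet a S ∪ shiftSet b S →
      Even ((Z 0).card + ((if G.Reachable a c then 1 else 0) +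
        (if G.Reachable a (r + c) then 1 else 0))) := by
    intro c hc
    have := twin_parity n hn S hS r hr0 hr1 (Z c) (by
      intro x y hxy
      rw [hmem, hmem]
      have hadj : G.Adj (x + c) (y + c) := by
        rw [hG, SimpleGraph.fromEdgeSet_adj]
        refine ⟨hc ⟨s(x, y), hxy, rfl⟩, fun hE => ?_⟩
        exact hS.2.1 _ hxy (by simpa using hE)
      exact ⟨fun h => h.trans hadj.reachable, fun h => h.trans hadj.symm.reachable⟩)
    rw [hcard, twin_card_pair _ _ hr0.symm] at this
    simpa only [hmem, zero_add] using this
  have h1 := key a Set.subset_union_left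
  have h2 := key b Set.subset_union_right
  rw [if_pos (SimpleGraph.Reachable.refl a)] at h1
  rw [if_neg h] at h2
  have hiff : G.Reachable a (r + a) ↔ G.Reachable a (r + b) :=
    ⟨fun h => h.trans hab, fun h => h.trans hab.symm⟩
  simp only [hiff] at h1
  rw [Nat.even_iff] at h1 h2
  omega

theorem stmt4 (n : ℕ) (hn : 2 ≤ n)
    (S : Set (Sym2 (ZMod (2*n)))) (hS : IsEvenStarter n S)
    (r : ZMod (2*n)) (hr0 : r ≠ 0) (hr1 : ∀ e ∈ S, r ∉ e)
    (hcode : IsCCode n S) :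
    IsCCode n ((Sym2.map (· - r)) '' S) := by
  have hinj : Function.Injective (fun x : ZMod (2*n) => x - r) := sub_left_injective
  obtain ⟨hP, hC⟩ := hcode
  refine ⟨⟨?_, ?_, ?_, ?_⟩, ?_⟩
  · rw [Set.ncard_image_of_injective _ (Sym2.map.injective hinj)]
    exact hP.1
  · rintro _ ⟨e, he, rfl⟩ hdg
    exact hP.2.1 e he ((Sym2.isDiag_map hinj).1 hdg)
  · rintro _ ⟨e, he, rfl⟩ h0
    rw [Sym2.mem_map] at h0
    obtain ⟨x, hx, hxr⟩ := h0
    rw [sub_eq_zero.1 hxr] at hx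
    exact hr1 e he hx
  · rintro _ ⟨e, he, rfl⟩ _ ⟨e', he', rfl⟩ hne z hz hz'
    rw [Sym2.mem_map] at hz hz'
    obtain ⟨x, hx, rfl⟩ := hz
    obtain ⟨y, hy, hxy⟩ := hz'
    rw [hinj hxy] at hy
    exact hP.2.2.2 e he e' he' (fun h => hne (by rw [h])) x hx hy
  · intro a b hab
    rw [shiftSet_twin, shiftSet_twin]
    obtain ⟨h1, h2, h3⟩ := hC (a - r) (b - r) (fun h => hab (hinj h))
    refine ⟨h1, h2, ?_⟩
    have := twin_reach n hn S hP r hr0 hr1 _ _ h3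
    simpa using this
end

section
/- Let n ≥ 2 and let F₀,…,F_{2n−1} be a bipyramidal one-factorization of G_{2n+2}. If for every integer i with 1 ≤ i ≤ n the graph on the vertex set of G_{2n+2} with edge set F₀ ∪ F_i is connected and every vertex has degree 2 (i.e., F₀ ∪ F_i is a Hamiltonian cycle), then for all j ≠ k with 0 ≤ j, k ≤ 2n−1 the graph with edge set F_j ∪ F_k is connected and every vertex has degree 2; that is, the one-factorization is a bipyramidal P1F. -/
theorem hamCycle_image {V : Type} (f : V ≃ V) (E : Set (Sym2 V)) (h : IsHamCycleOn E) :
    IsHamCycleOn (Sym2.map f '' E) := by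
  let φ : SimpleGraph.fromEdgeSet E ≃g SimpleGraph.fromEdgeSet (Sym2.map f '' E) :=
    { toEquiv := f
      map_rel_iff' := by
        intro a b
        simp only [SimpleGraph.fromEdgeSet_adj]
        have : s(f a, f b) = Sym2.map f s(a, b) := rfl
        rw [this, (Sym2.map.injective f.injective).mem_set_image, f.injective.ne_iff] }
  refine ⟨φ.connected_iff.mp h.1, fun v => ?_⟩
  obtain ⟨w, rfl⟩ := f.surjective v
  rw [← h.2 w, ← Nat.card_coe_set_eq, ← Nat.card_coe_set_eq]
  exact (Nat.card_congr (φ.mapNeighborSet w)).symm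

theorem vshift_comp (n : ℕ) (i j : ZMod (2*n)) :
    vshift n j ∘ vshift n i = vshift n (i + j) := by
  funext v
  cases v <;> simp [vshift, add_assoc]

def vshiftEquiv (n : ℕ) (i : ZMod (2*n)) : Vtx n ≃ Vtx n where
  toFun := vshift n i
  invFun := vshift n (-i)
  left_inv v := by cases v <;> simp [vshift]
  right_inv v := by cases v <;> simp [vshift]

/-- For a bipyramidal one-factorization of `G_{2n+2}`, if `F 0 ∪ F i`
is a Hamiltonian cycle for every integer `1 ≤ i ≤ n`, then `F j ∪ F k` is a Hamiltonian
cycle for all `j ≠ k`, i.e. the one-factorization is a bipyramidal P1F. -/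
theorem stmt6 (n : ℕ) (hn : 2 ≤ n)
    (F : ZMod (2*n) → Set (Sym2 (Vtx n)))
    (hF : IsBipyramidalOF n F)
    (hHam : ∀ i : ℕ, 1 ≤ i → i ≤ n → IsHamCycleOn (F 0 ∪ F (i : ZMod (2*n)))) :
    ∀ j k : ZMod (2*n), j ≠ k → IsHamCycleOn (F j ∪ F k) := by
  have hS : ∀ i j, F (i + j) = Sym2.map (vshift n j) '' F i := by
    intro i j
    rw [hF.2.2.2 (i + j), hF.2.2.2 i, ← Set.image_comp, ← Sym2.map_comp, vshift_comp]
  have : NeZero (2 * n) := ⟨by omega⟩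
  have key : ∀ j k : ZMod (2*n), j ≠ k → (k - j).val ≤ n → IsHamCycleOn (F j ∪ F k) := by
    intro j k hjk hle
    have hne : (k - j).val ≠ 0 := by
      rw [Ne, ZMod.val_eq_zero]
      exact sub_ne_zero.mpr hjk.symm
    have h := hamCycle_image (vshiftEquiv n j) _ (hHam (k - j).val (by omega) hle)
    rw [ZMod.natCast_zmod_val, Set.image_union] at h
    have h1 := hS 0 j
    have h2 := hS (k - j) j
    rw [zero_add] at h1
    rw [sub_add_cancel] at h2
    rw [h1, h2]
    exact h
  intro j k hjk
  by_cases hle : (k - j).val ≤ n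
  · exact key j k hjk hle
  · rw [Set.union_comm]
    refine key k j hjk.symm ?_
    have : NeZero (k - j) := ⟨sub_ne_zero.mpr hjk.symm⟩
    rw [← neg_sub k j, ZMod.val_neg_of_ne_zero]
    omega
end

section
/- The set C₀ = {{1,2},{3,11},{4,6},{5,9},{7,10},{8,13}} of unordered pairs of elements of Z_14 = ℤ/14ℤ defines a C-code of length 14: C₀ consists of 6 pairwise disjoint pairs of nonzero elements, and setting C_i = {{x+i, y+i} : {x,y} ∈ C₀} for i ∈ Z_14, for all m ≠ k in Z_14 one has C_m ∩ C_k = ∅, the simple graph on vertex set Z_14 with edge set C_m ∪ C_k contains no cycle, and m and k lie in different connected components of that graph. -/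
/-- Partner of `x` in `C₀` (fixing the two uncovered elements). -/
def cpart : Fin 14 → Fin 14 := ![0, 2, 1, 11, 6, 9, 4, 10, 13, 5, 7, 3, 12, 8]

/-- Position of `x` on the two paths formed by `C_0 ∪ C_d`; the first path starts at
`0` (rank 0), the second one at `d` (rank 20). -/
def crank : Fin 14 → Fin 14 → ℕ := ![
  ![0, 0, 0, 0, 0, 0, 0, 0, 0, 0, 0, 0, 0, 0],
  ![0, 20, 21, 22, 6, 2, 5, 3, 24, 1, 4, 23, 7, 25],
  ![0, 21, 20, 25, 26, 30, 27, 23, 28, 31, 22, 24, 32, 29],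
  ![0, 23, 22, 20, 2, 3, 1, 5, 8, 4, 6, 21, 9, 7],
  ![0, 28, 29, 2, 20, 22, 21, 27, 25, 23, 26, 1, 3, 24],
  ![0, 8, 7, 23, 4, 20, 3, 2, 6, 21, 1, 22, 9, 5],
  ![0, 5, 6, 3, 21, 1, 20, 9, 8, 2, 10, 4, 11, 7],
  ![0, 24, 25, 1, 22, 6, 23, 20, 4, 5, 21, 2, 26, 3],
  ![0, 29, 28, 22, 30, 24, 31, 27, 20, 25, 26, 23, 1, 21],
  ![0, 23, 22, 26, 1, 21, 2, 29, 25, 20, 28, 27, 3, 24],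
  ![0, 2, 1, 7, 5, 3, 6, 21, 23, 4, 20, 8, 9, 22],
  ![0, 22, 23, 21, 25, 28, 24, 26, 1, 29, 27, 20, 3, 2],
  ![0, 5, 6, 10, 7, 3, 8, 11, 2, 4, 12, 9, 20, 1],
  ![0, 1, 2, 26, 22, 25, 23, 4, 21, 24, 3, 27, 5, 20]]

theorem crank_step : ∀ d x : Fin 14, d ≠ 0 → cpart x ≠ x →
    (crank d (cpart x) = crank d x + 1 ∨ crank d x = crank d (cpart x) + 1) := by
  decide +kernel

theorem crank_step' : ∀ d x : Fin 14, d ≠ 0 → cpart (x - d) + d ≠ x →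
    (crank d (cpart (x - d) + d) = crank d x + 1 ∨
      crank d x = crank d (cpart (x - d) + d) + 1) := by
  decide +kernel

theorem crank_inj : ∀ d x y : Fin 14, d ≠ 0 → crank d x = crank d y → x = y := by
  decide +kernel

theorem crank_ends : ∀ d x : Fin 14, d ≠ 0 →
    crank d 0 = 0 ∧ crank d d = 20 ∧ crank d x ≠ 15 := by
  decide +kernel

theorem cpart_disj : ∀ d x : Fin 14, d ≠ 0 → cpart x = cpart (x - d) + d → cpart x = x := by
  decide +kernel

theorem reach_closed {V : Type} {G : SimpleGraph V} (P : V → Prop)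
    (h : ∀ x y, G.Adj x y → P x → P y) {u v : V} (huv : G.Reachable u v) (hu : P u) : P v := by
  obtain ⟨w⟩ := huv
  induction w with
  | nil => exact hu
  | cons hadj _ ih => exact ih (h _ _ hadj hu)

theorem acyclic_of_rank {V : Type} {G : SimpleGraph V} (r : V → ℕ)
    (hinj : Function.Injective r)
    (h : ∀ x y, G.Adj x y → r y = r x + 1 ∨ r x = r y + 1) : G.IsAcyclic := by
  have key : ∀ u v, r v = r u + 1 →
      ¬ (G \ SimpleGraph.fromEdgeSet {s(u, v)}).Reachable u v := by
    intro u v huv hr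
    have := reach_closed (fun w => r w ≤ r u) (by
      intro x y hxy hx
      simp only [SimpleGraph.sdiff_adj, SimpleGraph.fromEdgeSet_adj,
        Set.mem_singleton_iff] at hxy
      obtain ⟨hadj, hne⟩ := hxy
      by_contra hy
      have h1 := h x y hadj
      have hxu : x = u := hinj (by omega)
      have hyv : y = v := hinj (by omega)
      subst hxu hyv
      exact hne ⟨rfl, hadj.ne⟩) hr le_rfl
    omega
  rw [SimpleGraph.isAcyclic_iff_forall_adj_isBridge]
  intro u v huv
  rw [SimpleGraph.isBridge_iff]
  rcases h u v huv with h1 | h1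
  · exact key u v h1
  · intro hr
    rw [Sym2.eq_swap] at hr
    exact key v u h1 hr.symm

theorem shift_mem (a u v : Fin 14)
    (h : s(u, v) ∈ shiftSet (m := 2*7) a ({s((1 : ZMod (2*7)), 2), s(3, 11), s(4, 6), s(5, 9),
      s(7, 10), s(8, 13)} : Set (Sym2 (ZMod (2*7))))) :
    v - a = cpart (u - a) ∧ u ≠ v := by
  obtain ⟨e, he, hs⟩ := h
  simp only [Set.mem_insert_iff, Set.mem_singleton_iff] at he
  have aux : ∀ x y : Fin 14, x ≠ y → cpart x = y → cpart y = x →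
      Sym2.map (fun z : Fin 14 => z + a) s(x, y) = s(u, v) → v - a = cpart (u - a) ∧ u ≠ v := by
    intro x y hne h1 h2 h3
    simp only [Sym2.map_mk, Sym2.eq_iff] at h3
    rcases h3 with ⟨rfl, rfl⟩ | ⟨rfl, rfl⟩
    · simp [h1, hne]
    · simp [h2, hne.symm]
  rcases he with rfl | rfl | rfl | rfl | rfl | rfl
  · exact aux 1 2 (by decide) (by decide) (by decide) hs
  · exact aux 3 11 (by decide) (by decide) (by decide) hs
  · exact aux 4 6 (by decide) (by decide) (by decide) hs
  · exact aux 5 9 (by decide) (by decide) (by decide) hs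
  · exact aux 7 10 (by decide) (by decide) (by decide) hs
  · exact aux 8 13 (by decide) (by decide) (by decide) hs

theorem ccond : CCodeCond (2*7) ({s((1 : ZMod (2*7)), 2), s(3, 11), s(4, 6), s(5, 9), s(7, 10),
      s(8, 13)} : Set (Sym2 (ZMod (2*7)))) := by
  intro (a : Fin 14) (b : Fin 14) hab
  have hd : b - a ≠ 0 := sub_ne_zero.mpr (Ne.symm hab)
  have hstep : ∀ x y : Fin 14, (SimpleGraph.fromEdgeSet (shiftSet (m := 2*7) a ({s((1 : ZMod (2*7)), 2),
      s(3, 11), s(4, 6), s(5, 9), s(7, 10), s(8, 13)} : Set (Sym2 (ZMod (2*7)))) ∪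
      shiftSet (m := 2*7) b ({s((1 : ZMod (2*7)), 2), s(3, 11), s(4, 6), s(5, 9), s(7, 10),
      s(8, 13)} : Set (Sym2 (ZMod (2*7)))))).Adj x y →
      crank (b - a) (y - a) = crank (b - a) (x - a) + 1 ∨
      crank (b - a) (x - a) = crank (b - a) (y - a) + 1 := by
    intro x y hxy
    replace hxy := (SimpleGraph.fromEdgeSet_adj _).mp hxy
    rcases hxy.1 with h | h
    · obtain ⟨h1, h2⟩ := shift_mem a x y h
      have := crank_step (b - a) (x - a) hd (by
        rw [← h1]; intro h; exact h2 (sub_left_injective h).symm)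
      rwa [← h1] at this
    · obtain ⟨h1, h2⟩ := shift_mem b x y h
      have e : cpart (x - a - (b - a)) + (b - a) = y - a := by
        rw [sub_sub_sub_cancel_right, ← h1]; abel
      have := crank_step' (b - a) (x - a) hd (by
        rw [e]; intro h; exact h2 (sub_left_injective h).symm)
      rwa [e] at this
  refine ⟨?_, ?_, ?_⟩
  · rw [Set.eq_empty_iff_forall_notMem]
    intro e
    refine Sym2.ind (fun (x : Fin 14) (y : Fin 14) => ?_) e
    · rintro ⟨h, h'⟩
      obtain ⟨h1, h2⟩ := shift_mem a x y h
      obtain ⟨h3, -⟩ := shift_mem b x y h'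
      have := cpart_disj (b - a) (x - a) hd (by
        rw [sub_sub_sub_cancel_right, ← h1, ← h3]; abel)
      rw [← h1] at this
      exact h2 (sub_left_injective this).symm
  · refine acyclic_of_rank (fun x : Fin 14 => crank (b - a) (x - a)) ?_ hstep
    intro x y hxy
    exact sub_left_injective (crank_inj (b - a) _ _ hd hxy)
  · intro hr
    have := reach_closed (fun x : Fin 14 => crank (b - a) (x - a) < 15) (by
      intro x y hxy hx
      have h1 := hstep x y hxy
      have h2 := (crank_ends (b - a) (y - a) hd).2.2
      omega) hr (by
        have := (crank_ends (b - a) 0 hd).1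
        simp only [sub_self]; omega)
    have h2 := (crank_ends (b - a) 0 hd).2.1
    omega

/-- The set `C₀ = {{1,2},{3,11},{4,6},{5,9},{7,10},{8,13}}` defines a
C-code of length 14. -/
theorem stmt8 :
    IsCCode 7 ({s((1 : ZMod (2*7)), 2), s(3, 11), s(4, 6), s(5, 9), s(7, 10),
      s(8, 13)} : Set (Sym2 (ZMod (2*7)))) := by
  refine ⟨?_, ccond⟩
  have hC : ({s((1 : ZMod (2*7)), 2), s(3, 11), s(4, 6), s(5, 9), s(7, 10),
      s(8, 13)} : Set (Sym2 (ZMod (2*7)))) =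
      (({s((1 : ZMod (2*7)), 2), s(3, 11), s(4, 6), s(5, 9), s(7, 10),
      s(8, 13)} : Finset (Sym2 (ZMod (2*7)))) : Set (Sym2 (ZMod (2*7)))) := by
    simp
  rw [hC]
  refine ⟨?_, ?_, ?_, ?_⟩
  · rw [Set.ncard_coe_finset]
    decide +kernel
  · simp only [Finset.mem_coe]
    decide +kernel
  · simp only [Finset.mem_coe]
    decide +kernel
  · simp only [Finset.mem_coe]
    decide +kernel
end

section
/- For every prime p ≥ 5, the set Ŝ_E^A = {{x,y} : x,y ∈ (ℤ/pℤ)ˣ \ {1, 2⁻¹}, x + y = 1} is an even starter in the multiplicative group (ℤ/pℤ)ˣ: it consists of (p−3)/2 pairwise disjoint unordered pairs of elements of (ℤ/pℤ)ˣ \ {1}, and for every u ∈ (ℤ/pℤ)ˣ with u ≠ 1 and u ≠ −1 there is a pair {x,y} ∈ Ŝ_E^A with u = x⁻¹y or u = xy⁻¹. -/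
/-- For every prime `p ≥ 5`,
`Ŝ_E^A = {{x,y} : x,y ∈ (ZMod p)ˣ \ {1, 2⁻¹}, x + y = 1}` is an even starter in the
multiplicative group `(ZMod p)ˣ`. -/
theorem stmt9 (p : ℕ) [Fact p.Prime] (hp : 5 ≤ p) :
    IsMulEvenStarter p
      {e : Sym2 ((ZMod p)ˣ) | ∃ x y : (ZMod p)ˣ, e = s(x, y) ∧
        x ≠ 1 ∧ y ≠ 1 ∧ (x : ZMod p) ≠ (2 : ZMod p)⁻¹ ∧ (y : ZMod p) ≠ (2 : ZMod p)⁻¹ ∧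
        (x : ZMod p) + (y : ZMod p) = 1} := by
  classical
  set S : Set (Sym2 ((ZMod p)ˣ)) := {e : Sym2 ((ZMod p)ˣ) | ∃ x y : (ZMod p)ˣ, e = s(x, y) ∧
        x ≠ 1 ∧ y ≠ 1 ∧ (x : ZMod p) ≠ (2 : ZMod p)⁻¹ ∧ (y : ZMod p) ≠ (2 : ZMod p)⁻¹ ∧
        (x : ZMod p) + (y : ZMod p) = 1} with hS
  have h2 : (2 : ZMod p) ≠ 0 := by
    intro h
    have h' : ((2 : ℕ) : ZMod p) = 0 := by exact_mod_cast h
    rw [ZMod.natCast_eq_zero_iff] at h'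
    have := Nat.le_of_dvd (by norm_num) h'
    omega
  have hhalf : (2 : ZMod p)⁻¹ + (2 : ZMod p)⁻¹ = 1 := by
    field_simp
    norm_num
  have hdiag : ∀ e ∈ S, ¬ e.IsDiag := by
    rintro e ⟨x, y, rfl, h1, h1', hx, hy, hxy⟩ hd
    rw [Sym2.mk_isDiag_iff] at hd
    subst hd
    apply hx
    field_simp
    linear_combination hxy
  have hone : ∀ e ∈ S, (1 : (ZMod p)ˣ) ∉ e := by
    rintro e ⟨x, y, rfl, h1, h1', hx, hy, hxy⟩ hd
    rw [Sym2.mem_iff] at hd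
    rcases hd with h | h
    · exact h1 h.symm
    · exact h1' h.symm
  have hdisj : ∀ e ∈ S, ∀ e' ∈ S, e ≠ e' → ∀ a, a ∈ e → a ∉ e' := by
    have key : ∀ e ∈ S, ∀ a, a ∈ e → ∃ b : (ZMod p)ˣ, e = s(a, b) ∧ (a : ZMod p) + b = 1 := by
      rintro e ⟨x, y, rfl, h1, h1', hx, hy, hxy⟩ a ha
      rw [Sym2.mem_iff] at ha
      rcases ha with rfl | rfl
      · exact ⟨y, rfl, hxy⟩
      · exact ⟨x, Sym2.eq_swap, by rw [add_comm]; exact hxy⟩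
    intro e he e' he' hne a ha ha'
    obtain ⟨b, rfl, hb⟩ := key e he a ha
    obtain ⟨c, rfl, hc⟩ := key e' he' a ha'
    apply hne
    have : b = c := Units.ext (by linear_combination hb - hc)
    rw [this]
  refine ⟨?_, hdiag, hone, hdisj, ?_⟩
  · have hfin : S.Finite := Set.toFinite S
    let T : Finset (Sym2 ((ZMod p)ˣ)) := hfin.toFinset
    have hT : ∀ e, e ∈ T ↔ e ∈ S := fun e => hfin.mem_toFinset
    have hc : (T.biUnion Sym2.toFinset).card = ∑ e ∈ T, e.toFinset.card := by
      apply Finset.card_biUnion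
      intro e he e' he' hne
      refine Finset.disjoint_left.2 ?_
      intro a ha ha'
      rw [Sym2.mem_toFinset] at ha ha'
      exact hdisj e ((hT e).1 he) e' ((hT e').1 he') hne a ha ha'
    have hs : ∑ e ∈ T, e.toFinset.card = T.card * 2 := by
      apply Finset.sum_const_nat
      intro e he
      exact Sym2.card_toFinset_of_not_isDiag e (hdiag e ((hT e).1 he))
    let w : (ZMod p)ˣ := (Units.mk0 (2 : ZMod p) h2)⁻¹
    have hw : (w : ZMod p) = (2 : ZMod p)⁻¹ := by simp [w]
    have hw1 : (1 : (ZMod p)ˣ) ≠ w := by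
      intro h
      rw [← hw, ← h] at hhalf
      simp at hhalf
    have hu : T.biUnion Sym2.toFinset = Finset.univ \ {1, w} := by
      ext a
      simp only [Finset.mem_biUnion, Sym2.mem_toFinset, Finset.mem_sdiff, Finset.mem_univ,
        true_and, Finset.mem_insert, Finset.mem_singleton, not_or]
      constructor
      · rintro ⟨e, he, ha⟩
        rw [hT] at he
        obtain ⟨x, y, rfl, h1, h1', hx, hy, hxy⟩ := he
        rw [Sym2.mem_iff] at ha
        rcases ha with rfl | rfl
        · exact ⟨h1, fun h => hx (by rw [h, hw])⟩
        · exact ⟨h1', fun h => hy (by rw [h, hw])⟩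
      · rintro ⟨ha1, haw⟩
        have hne : (1 : ZMod p) - a ≠ 0 := by
          intro h
          exact ha1 (Units.ext (by simpa using (sub_eq_zero.1 h).symm))
        have hah : (a : ZMod p) ≠ 2⁻¹ := fun h => haw (Units.ext (by rw [h, hw]))
        refine ⟨s(a, Units.mk0 _ hne), (hT _).2 ⟨a, Units.mk0 _ hne, rfl, ha1, ?_, hah, ?_, ?_⟩,
          Sym2.mem_mk_left _ _⟩
        · intro h
          have := congrArg (fun z : (ZMod p)ˣ => (z : ZMod p)) h
          simp at this
        · intro h
          rw [Units.val_mk0] at h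
          apply hah
          linear_combination - hhalf - h
        · simp
    have hcard : (Finset.univ \ {1, w} : Finset (ZMod p)ˣ).card = p - 1 - 2 := by
      rw [Finset.card_sdiff_of_subset (Finset.subset_univ _), Finset.card_pair hw1,
        Finset.card_univ, ZMod.card_units]
    rw [Set.ncard_eq_toFinset_card S hfin]
    change T.card = _
    rw [hu, hcard, hs] at hc
    omega
  · intro u hu1 hu2
    have hne : (1 : ZMod p) + u ≠ 0 := by
      intro h
      apply hu2
      apply Units.ext
      push_cast
      linear_combination h
    let v : (ZMod p)ˣ := Units.mk0 _ hne
    have hv : (v : ZMod p) = 1 + u := rfl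
    have hu1' : (u : ZMod p) ≠ 1 := fun h => hu1 (Units.ext h)
    have hvi : (v : ZMod p) * ((v⁻¹ : (ZMod p)ˣ) : ZMod p) = 1 := Units.mul_inv v
    have hu0 : (u : ZMod p) ≠ 0 := u.ne_zero
    refine ⟨v⁻¹, v⁻¹ * u, ⟨_, _, rfl, ?_, ?_, ?_, ?_, ?_⟩, Or.inl (by group)⟩
    · intro h
      rw [h, hv] at hvi
      apply hu0
      push_cast at hvi
      linear_combination hvi
    · intro h
      have h' : u = v := by
        rw [inv_mul_eq_one] at h
        exact h.symm
      have := congrArg (fun z : (ZMod p)ˣ => (z : ZMod p)) h'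
      simp [hv] at this
    · intro h
      rw [h, hv] at hvi
      apply hu1'
      field_simp at hvi
      linear_combination hvi
    · intro h
      rw [Units.val_mul] at h
      have h3 : (u : ZMod p) = (v : ZMod p) * 2⁻¹ := by
        linear_combination (v : ZMod p) * h - (u : ZMod p) * hvi
      rw [hv] at h3
      field_simp at h3
      apply hu1'
      linear_combination h3
    · rw [Units.val_mul]
      rw [hv] at hvi
      linear_combination hvi
end

section
/- For every prime p ≥ 5, the set Ŝ_E^B = {{x,y} : x,y ∈ (ℤ/pℤ)ˣ \ {1, 2⁻¹, 2, −1}, x + y = 1} ∪ {{2⁻¹, −1}} is an even starter in the multiplicative group (ℤ/pℤ)ˣ: it consists of (p−3)/2 pairwise disjoint unordered pairs of elements of (ℤ/pℤ)ˣ \ {1}, and for every u ∈ (ℤ/pℤ)ˣ with u ≠ 1 and u ≠ −1 there is a pair {x,y} ∈ Ŝ_E^B with u = x⁻¹y or u = xy⁻¹. -/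
/-- For every prime `p ≥ 5`,
`Ŝ_E^B = {{x,y} : x,y ∈ (ZMod p)ˣ \ {1, 2⁻¹, 2, -1}, x + y = 1} ∪ {{2⁻¹, -1}}` is an
even starter in the multiplicative group `(ZMod p)ˣ`. Here `z` is the unit whose value
is `2⁻¹`. -/
theorem stmt10 (p : ℕ) [Fact p.Prime] (hp : 5 ≤ p)
    (z : (ZMod p)ˣ) (hz : (z : ZMod p) = (2 : ZMod p)⁻¹) :
    IsMulEvenStarter p
      ({e : Sym2 ((ZMod p)ˣ) | ∃ x y : (ZMod p)ˣ, e = s(x, y) ∧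
        (x : ZMod p) ∉ ({1, (2 : ZMod p)⁻¹, 2, -1} : Set (ZMod p)) ∧
        (y : ZMod p) ∉ ({1, (2 : ZMod p)⁻¹, 2, -1} : Set (ZMod p)) ∧
        (x : ZMod p) + (y : ZMod p) = 1} ∪ {s(z, (-1 : (ZMod p)ˣ))}) := by
  classical
  have hP : p.Prime := Fact.out
  have hnat : ∀ k : ℕ, 0 < k → k < 5 → (k : ZMod p) ≠ 0 := by
    intro k h0 h5 h
    rw [ZMod.natCast_eq_zero_iff] at h
    have := Nat.le_of_dvd h0 h
    omega
  have h2 : (2 : ZMod p) ≠ 0 := by exact_mod_cast hnat 2 (by norm_num) (by norm_num)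
  have h3 : (3 : ZMod p) ≠ 0 := by exact_mod_cast hnat 3 (by norm_num) (by norm_num)
  have h1 : (1 : ZMod p) ≠ 0 := one_ne_zero
  have hz2 : 2 * (z : ZMod p) = 1 := by rw [hz]; field_simp
  rw [← hz]
  set S : Set (Sym2 ((ZMod p)ˣ)) := ({e : Sym2 ((ZMod p)ˣ) | ∃ x y : (ZMod p)ˣ, e = s(x, y) ∧
        (x : ZMod p) ∉ ({1, (z : ZMod p), 2, -1} : Set (ZMod p)) ∧
        (y : ZMod p) ∉ ({1, (z : ZMod p), 2, -1} : Set (ZMod p)) ∧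
        (x : ZMod p) + (y : ZMod p) = 1} ∪ {s(z, (-1 : (ZMod p)ˣ))}) with hS
  have key : ∀ e ∈ S, ∃ x y : (ZMod p)ˣ, e = s(x, y) ∧
      (((x : ZMod p) ≠ 1 ∧ (x : ZMod p) ≠ z ∧ (x : ZMod p) ≠ 2 ∧ (x : ZMod p) ≠ -1 ∧
        (y : ZMod p) ≠ 1 ∧ (y : ZMod p) ≠ z ∧ (y : ZMod p) ≠ 2 ∧ (y : ZMod p) ≠ -1 ∧
        (x : ZMod p) + (y : ZMod p) = 1) ∨ (x = z ∧ y = -1)) := by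
    rintro e (⟨x, y, rfl, hx, hy, hxy⟩ | rfl)
    · refine ⟨x, y, rfl, Or.inl ?_⟩
      simp only [Set.mem_insert_iff, Set.mem_singleton_iff, not_or] at hx hy
      tauto
    · exact ⟨z, -1, rfl, Or.inr ⟨rfl, rfl⟩⟩
  have hz1 : (z : ZMod p) ≠ 1 := by
    intro h; apply h1; linear_combination hz2 - 2 * h
  have hzm : (z : ZMod p) ≠ -1 := by
    intro h; apply h3; linear_combination -hz2 + 2 * h
  have hzz : (z : ZMod p) ≠ 2 := by
    intro h; apply h3; linear_combination hz2 - 2 * h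
  have hm1 : (-1 : ZMod p) ≠ 1 := by
    intro h; apply h2; linear_combination -h
  have hm2 : (-1 : ZMod p) ≠ 2 := by
    intro h; apply h3; linear_combination -h
  have mem_ne : ∀ e ∈ S, ∀ a ∈ e, (a : ZMod p) ≠ 1 ∧ (a : ZMod p) ≠ 2 := by
    intro e he a ha
    obtain ⟨x, y, rfl, h⟩ := key e he
    rw [Sym2.mem_iff] at ha
    rcases h with h | ⟨rfl, rfl⟩
    · rcases ha with rfl | rfl <;> tauto
    · rcases ha with rfl | rfl
      · exact ⟨hz1, hzz⟩
      · simpa using ⟨hm1, hm2⟩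
  have nd : ∀ e ∈ S, ¬ e.IsDiag := by
    intro e he
    obtain ⟨x, y, rfl, h⟩ := key e he
    rw [Sym2.mk_isDiag_iff]
    rintro rfl
    rcases h with h | ⟨rfl, h⟩
    · apply h.2.1
      apply mul_left_cancel₀ h2
      linear_combination h.2.2.2.2.2.2.2.2 - hz2
    · apply hzm
      rw [h]; simp
  have dj : ∀ e ∈ S, ∀ e' ∈ S, e ≠ e' → ∀ a, a ∈ e → a ∉ e' := by
    intro e he e' he' hne a ha ha'
    apply hne
    obtain ⟨x, y, rfl, h⟩ := key e he
    obtain ⟨x', y', rfl, h'⟩ := key e' he'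
    rw [Sym2.mem_iff] at ha ha'
    have hu : ((-1 : (ZMod p)ˣ) : ZMod p) = -1 := by simp
    rcases h with h | ⟨rfl, rfl⟩ <;> rcases h' with h' | ⟨rfl, rfl⟩
    · obtain ⟨-, -, -, -, -, -, -, -, h⟩ := h
      obtain ⟨-, -, -, -, -, -, -, -, h'⟩ := h'
      rw [Sym2.eq_iff]
      rcases ha with rfl | rfl <;> rcases ha' with rfl | rfl
      · left; exact ⟨rfl, Units.ext (by linear_combination h - h')⟩
      · right; exact ⟨rfl, Units.ext (by linear_combination h - h')⟩
      · right; exact ⟨Units.ext (by linear_combination h - h'), rfl⟩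
      · left; exact ⟨Units.ext (by linear_combination h - h'), rfl⟩
    · exfalso
      obtain ⟨-, k1, -, k2, -, k3, -, k4, -⟩ := h
      rcases ha with rfl | rfl <;> rcases ha' with hq | hq
      · exact k1 (congrArg Units.val hq)
      · exact k2 ((congrArg Units.val hq).trans hu)
      · exact k3 (congrArg Units.val hq)
      · exact k4 ((congrArg Units.val hq).trans hu)
    · exfalso
      obtain ⟨-, k1, -, k2, -, k3, -, k4, -⟩ := h'
      rcases ha' with rfl | rfl <;> rcases ha with hq | hq
      · exact k1 (congrArg Units.val hq)
      · exact k2 ((congrArg Units.val hq).trans hu)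
      · exact k3 (congrArg Units.val hq)
      · exact k4 ((congrArg Units.val hq).trans hu)
    · rfl
  have hpair : ∀ x y : (ZMod p)ˣ, (x : ZMod p) + y = 1 → (x : ZMod p) ≠ z →
      (x : ZMod p) ≠ 2 → (x : ZMod p) ≠ -1 → s(x, y) ∈ S := by
    intro x y hxy hxz hx2 hxm
    refine Or.inl ⟨x, y, rfl, ?_, ?_, hxy⟩
    · simp only [Set.mem_insert_iff, Set.mem_singleton_iff, not_or]
      refine ⟨fun h => y.ne_zero ?_, hxz, hx2, hxm⟩
      linear_combination hxy - h
    · simp only [Set.mem_insert_iff, Set.mem_singleton_iff, not_or]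
      refine ⟨fun h => x.ne_zero ?_, fun h => hxz ?_, fun h => hxm ?_, fun h => hx2 ?_⟩
      · linear_combination hxy - h
      · linear_combination hxy - h - hz2
      · linear_combination hxy - h
      · linear_combination hxy - h
  have hlast : s(z, (-1 : (ZMod p)ˣ)) ∈ S := Or.inr rfl
  have hcov : ∀ a : (ZMod p)ˣ, (a : ZMod p) ≠ 1 → (a : ZMod p) ≠ 2 → ∃ e ∈ S, a ∈ e := by
    intro a ha1 ha2
    by_cases haz : (a : ZMod p) = z
    · exact ⟨_, hlast, by rw [Units.ext haz]; simp⟩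
    by_cases ham : (a : ZMod p) = -1
    · have : a = -1 := Units.ext (by simpa using ham)
      exact ⟨_, hlast, by rw [this]; simp⟩
    have hne : (1 : ZMod p) - a ≠ 0 := sub_ne_zero.mpr (Ne.symm ha1)
    exact ⟨s(a, Units.mk0 _ hne), hpair _ _ (by simp) haz ha2 ham, by simp⟩
  refine ⟨?_, nd, fun e he h => (mem_ne e he 1 h).1 (by simp), dj, ?_⟩
  · have hw : ((z⁻¹ : (ZMod p)ˣ) : ZMod p) = 2 := by
      rw [Units.val_inv_eq_inv_val, hz, inv_inv]
    have hfin : S.Finite := Set.toFinite S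
    rw [Set.ncard_eq_toFinset_card S hfin]
    have hb : hfin.toFinset.biUnion (fun e => e.toFinset) =
        (Finset.univ : Finset (ZMod p)ˣ) \ {1, z⁻¹} := by
      ext a
      simp only [Finset.mem_biUnion, Set.Finite.mem_toFinset, Sym2.mem_toFinset,
        Finset.mem_sdiff, Finset.mem_univ, true_and, Finset.mem_insert, Finset.mem_singleton,
        not_or]
      constructor
      · rintro ⟨e, he, ha⟩
        have := mem_ne e he a ha
        refine ⟨?_, ?_⟩
        · rintro rfl; exact this.1 (by simp)
        · rintro rfl; exact this.2 hw
      · rintro ⟨h1', h2'⟩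
        refine hcov a (fun h => h1' (Units.ext (by simpa using h)))
          (fun h => h2' (Units.ext (h.trans hw.symm)))
    have hc := congrArg Finset.card hb
    rw [Finset.card_biUnion, Finset.sum_congr rfl (g := fun _ => 2),
      Finset.card_sdiff_of_subset (Finset.subset_univ _), Finset.card_univ, ZMod.card_units,
      Finset.card_pair] at hc
    · simp only [Finset.sum_const, smul_eq_mul] at hc
      omega
    · intro h
      apply hz1
      have : z = 1 := by rw [← inv_inv z, ← h, inv_one]
      rw [this]; simp
    · intro e he
      exact Sym2.card_toFinset_of_not_isDiag e (nd e (by simpa using he))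
    · intro e he e' he' hne
      refine Finset.disjoint_left.mpr ?_
      intro a ha ha'
      rw [Sym2.mem_toFinset] at ha ha'
      exact dj e (by simpa using he) e' (by simpa using he') hne a ha ha'
  · intro u hu1 hum
    have hu1' : (u : ZMod p) ≠ 1 := fun h => hu1 (Units.ext (by simpa using h))
    have hs : (1 : ZMod p) + u ≠ 0 := fun h => hum (Units.ext (by
      rw [Units.val_neg, Units.val_one]; linear_combination h))
    by_cases c1 : (u : ZMod p) = -2
    · refine ⟨z, -1, hlast, Or.inl ?_⟩
      rw [eq_inv_mul_iff_mul_eq]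
      apply Units.ext
      rw [Units.val_mul, Units.val_neg, Units.val_one, c1]
      linear_combination -hz2
    by_cases c2 : (u : ZMod p) = -z
    · refine ⟨z, -1, hlast, Or.inr ?_⟩
      rw [eq_mul_inv_iff_mul_eq]
      apply Units.ext
      rw [Units.val_mul, Units.val_neg, Units.val_one, c2]
      ring
    set t := Units.mk0 _ hs with ht
    have htv : (t : ZMod p) = 1 + u := rfl
    have hti : (t : ZMod p) * ((t⁻¹ : (ZMod p)ˣ) : ZMod p) = 1 := Units.mul_inv t
    rw [htv] at hti
    refine ⟨t⁻¹, u * t⁻¹, hpair _ _ ?_ ?_ ?_ ?_, Or.inl (by rw [inv_inv, mul_comm u, mul_inv_cancel_left])⟩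
    · rw [Units.val_mul]; linear_combination hti
    · intro h
      rw [h] at hti
      apply hu1'
      linear_combination 2 * hti - (1 + (u : ZMod p)) * hz2
    · intro h
      rw [h] at hti
      apply c2
      linear_combination (z : ZMod p) * hti - (1 + (u : ZMod p)) * hz2 + hz2
    · intro h
      rw [h] at hti
      apply c1
      linear_combination -hti
end

section
/- Let p ≥ 5 be a prime and let g be a generator of (ℤ/pℤ)ˣ; for x ∈ (ℤ/pℤ)ˣ let log_g(x) denote the unique element a ∈ ℤ/(p−1)ℤ with g^a = x. Then the set C₀^A = {{log_g(x), log_g(y)} : x,y ∈ (ℤ/pℤ)ˣ \ {1, 2⁻¹}, x + y = 1} defines a C-code of length p−1 in Z_{p−1} = ℤ/(p−1)ℤ: C₀^A consists of (p−3)/2 pairwise disjoint unordered pairs of nonzero elements of Z_{p−1}, and setting C_i = {{a+i, b+i} : {a,b} ∈ C₀^A} for i ∈ Z_{p−1}, for all m ≠ k in Z_{p−1} one has C_m ∩ C_k = ∅, the simple graph on vertex set Z_{p−1} with edge set C_m ∪ C_k contains no cycle, and m and k lie in different connected components of that graph. -/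
theorem aux_invariant {V : Type*} (G : SimpleGraph V) (P : V → Prop)
    (h : ∀ u v, G.Adj u v → P u → P v) {u v : V} (hr : G.Reachable u v) (hu : P u) : P v := by
  obtain ⟨w⟩ := hr
  induction w with
  | nil => exact hu
  | cons hadj _ ih => exact ih (h _ _ hadj hu)

theorem aux_acyclic {V : Type*} (G : SimpleGraph V) (f : V → ℕ) (hf : Function.Injective f)
    (h : ∀ u v, G.Adj u v → f v = f u + 1 ∨ f u = f v + 1) : G.IsAcyclic := by
  have key : ∀ u v, f v = f u + 1 → ¬ (G.deleteEdges {s(u, v)}).Reachable u v := by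
    intro u v huv hr
    have := aux_invariant _ (fun w => f w ≤ f u) ?_ hr le_rfl
    · omega
    · intro x y hxy hx
      rw [SimpleGraph.deleteEdges_adj] at hxy
      obtain ⟨hadj, hne⟩ := hxy
      by_contra hy
      have h1 := h x y hadj
      have hxu : x = u := hf (by omega)
      have hyv : y = v := hf (by omega)
      subst hxu hyv
      simp at hne
  rw [SimpleGraph.isAcyclic_iff_forall_adj_isBridge]
  intro u v huv
  rcases h u v huv with h1 | h1
  · exact key u v h1
  · rw [Sym2.eq_swap]
    exact key v u h1

/-- Position of a residue on the Hamiltonian path. -/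
def auxPos {p : ℕ} (c : ZMod p) : ℕ :=
  if 2 * c.val < p then 2 * c.val else 2 * (p - c.val) - 1

theorem auxPos_inj {p : ℕ} [Fact p.Prime] : Function.Injective (auxPos (p := p)) := by
  intro c c' h
  have h1 := ZMod.val_lt c
  have h2 := ZMod.val_lt c'
  apply ZMod.val_injective p
  unfold auxPos at h
  split_ifs at h <;> omega

theorem aux_val_sum {p : ℕ} [Fact p.Prime] (c c' : ZMod p) (h : c + c' = 0) (h0 : c ≠ 0) :
    c.val + c'.val = p ∧ c.val ≠ 0 ∧ c'.val ≠ 0 := by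
  have h1 := ZMod.val_lt c
  have h2 := ZMod.val_lt c'
  have h3 : c.val ≠ 0 := by rwa [Ne, ZMod.val_eq_zero]
  have hd : p ∣ c.val + c'.val := by
    rw [← ZMod.natCast_eq_zero_iff]; push_cast; simpa using h
  obtain ⟨k, hk⟩ := hd
  have : k = 1 := by
    have : k < 2 := by
      by_contra hk2
      have : p * 2 ≤ p * k := Nat.mul_le_mul_left _ (by omega)
      omega
    have : k ≠ 0 := by rintro rfl; omega
    omega
  subst this
  omega

theorem aux_val_sum' {p : ℕ} [Fact p.Prime] (c c' : ZMod p) (h : c + c' = -1) :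
    c.val + c'.val + 1 = p := by
  have h1 := ZMod.val_lt c
  have h2 := ZMod.val_lt c'
  have hd : p ∣ c.val + c'.val + 1 := by
    rw [← ZMod.natCast_eq_zero_iff]; push_cast; simp [h]
  obtain ⟨k, hk⟩ := hd
  have : k = 1 := by
    have : k < 2 := by
      by_contra hk2
      have : p * 2 ≤ p * k := Nat.mul_le_mul_left _ (by omega)
      omega
    have : k ≠ 0 := by rintro rfl; omega
    omega
  subst this
  omega

/-- Explicit position change along edges of the first kind. -/
theorem auxPos_A {p : ℕ} [Fact p.Prime] (hp : p % 2 = 1) (c c' : ZMod p) (h : c + c' = 0)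
    (h0 : c ≠ 0) : (2 * c.val < p ∧ auxPos c = auxPos c' + 1) ∨
      (p < 2 * c.val ∧ auxPos c' = auxPos c + 1) := by
  have := aux_val_sum c c' h h0
  unfold auxPos
  split_ifs <;> omega

theorem auxPos_B {p : ℕ} [Fact p.Prime] (hp : p % 2 = 1) (c c' : ZMod p) (h : c + c' = -1)
    (h0 : c ≠ c') : (2 * c.val < p ∧ auxPos c' = auxPos c + 1) ∨
      (p < 2 * c.val ∧ auxPos c = auxPos c' + 1) := by
  have := aux_val_sum' c c' h
  have h3 : c.val ≠ c'.val := fun h => h0 (ZMod.val_injective p h)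
  unfold auxPos
  split_ifs <;> omega

/-- The graph statement over the field. -/
theorem aux_graph {p : ℕ} [Fact p.Prime] (hp : p % 2 = 1) {V : Type*} (G : SimpleGraph V)
    (φ : V → ZMod p) (hφ : Function.Injective φ) (hφ0 : ∀ v, φ v ≠ 0) (a b : V) (hab : a ≠ b)
    (hG : ∀ u v, G.Adj u v → u ≠ v ∧ (φ u + φ v = φ a ∨ φ u + φ v = φ b)) :
    G.IsAcyclic ∧ ¬ G.Reachable a b := by
  have h2 : (2 : ZMod p) ≠ 0 := by
    intro h
    have : ((2 : ℕ) : ZMod p) = 0 := by exact_mod_cast h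
    rw [ZMod.natCast_eq_zero_iff] at this
    have h3 := Nat.le_of_dvd (by norm_num) this
    have := (Fact.out : p.Prime).two_le
    omega
  have hd : φ a - φ b ≠ 0 := sub_ne_zero.2 fun h => hab (hφ h)
  set q : ZMod p → ZMod p := fun x => (x - φ a / 2) / (φ a - φ b) with hq
  have hqinj : Function.Injective q := by
    intro x y hxy
    simp only [hq] at hxy
    rw [div_left_inj' hd] at hxy
    exact sub_left_injective hxy
  have qA : ∀ x y, x + y = φ a → q x + q y = 0 := by
    intro x y hxy
    obtain rfl : x = φ a - y := eq_sub_of_add_eq hxy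
    simp only [hq]; field_simp; ring
  have qB : ∀ x y, x + y = φ b → q x + q y = -1 := by
    intro x y hxy
    obtain rfl : x = φ b - y := eq_sub_of_add_eq hxy
    simp only [hq]; field_simp; ring
  have qne : ∀ x y, x ≠ y → q x + q y = 0 → q x ≠ 0 := by
    intro x y hxy h h0
    apply hxy; apply hqinj
    rw [h0] at h ⊢; simpa using h.symm
  have step : ∀ u v, G.Adj u v → auxPos (q (φ v)) = auxPos (q (φ u)) + 1 ∨
      auxPos (q (φ u)) = auxPos (q (φ v)) + 1 := by
    intro u v huv
    obtain ⟨hne, h | h⟩ := hG u v huv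
    · have hne' : φ u ≠ φ v := fun h => hne (hφ h)
      have := auxPos_A hp _ _ (qA _ _ h) (qne _ _ hne' (qA _ _ h))
      omega
    · have hne' : q (φ u) ≠ q (φ v) := fun h => hne (hφ (hqinj h))
      have := auxPos_B hp _ _ (qB _ _ h) hne'
      omega
  refine ⟨aux_acyclic G (fun v => auxPos (q (φ v)))
    (fun x y h => hφ (hqinj (auxPos_inj h))) step, fun hr => ?_⟩
  have hz : ∀ v, auxPos (q (φ v)) ≠ auxPos (q 0) := fun v h => hφ0 v (hqinj (auxPos_inj h))
  have hA := auxPos_A hp _ _ (qA 0 (φ a) (by simp)) (qne _ _ (hφ0 a).symm (qA 0 (φ a) (by simp)))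
  have hB := auxPos_B hp _ _ (qB 0 (φ b) (by simp)) fun h => hφ0 b (hqinj h).symm
  have inv := aux_invariant G
    (fun v => auxPos (q (φ v)) < auxPos (q 0) ↔ auxPos (q (φ a)) < auxPos (q 0)) ?_ hr Iff.rfl
  · omega
  · intro u v huv h
    have := step u v huv
    have := hz u
    have := hz v
    omega

/-- Let `g` generate `(ZMod p)ˣ`, `p ≥ 5` prime, and let `L` be the
discrete logarithm to base `g` valued in `ZMod (p-1)`. Then
`C₀^A = {{L x, L y} : x, y ∈ (ZMod p)ˣ \ {1, 2⁻¹}, x + y = 1}` consists of `(p-3)/2`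
pairwise disjoint unordered pairs of nonzero elements of `ZMod (p-1)` and defines a
C-code of length `p-1`. -/
theorem stmt12 (p : ℕ) [Fact p.Prime] (hp : 5 ≤ p)
    (g : (ZMod p)ˣ) (hg : ∀ u : (ZMod p)ˣ, u ∈ Subgroup.zpowers g)
    (L : (ZMod p)ˣ → ZMod (p - 1)) (hL : ∀ x : (ZMod p)ˣ, g ^ (L x).val = x)
    (C0A : Set (Sym2 (ZMod (p - 1))))
    (hC0A : C0A = {e | ∃ x y : (ZMod p)ˣ, e = s(L x, L y) ∧
      x ≠ 1 ∧ y ≠ 1 ∧ (x : ZMod p) ≠ (2 : ZMod p)⁻¹ ∧ (y : ZMod p) ≠ (2 : ZMod p)⁻¹ ∧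
      (x : ZMod p) + (y : ZMod p) = 1}) :
    IsPairing (p - 1) ((p - 3) / 2) C0A ∧ CCodeCond (p - 1) C0A := by
  have hpp : p.Prime := Fact.out
  have hodd : p % 2 = 1 := by
    rcases hpp.eq_two_or_odd with h | h <;> omega
  have : NeZero (p - 1) := ⟨by omega⟩
  have hord : orderOf g = p - 1 := by
    rw [orderOf_eq_card_of_forall_mem_zpowers hg, Nat.card_eq_fintype_card, ZMod.card_units]
  set ψ : ZMod (p - 1) → (ZMod p)ˣ := fun t => g ^ t.val with hψ
  have ψinj : Function.Injective ψ := by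
    intro s t h
    apply ZMod.val_injective
    apply pow_injOn_Iio_orderOf _ _ h
    · simp [hord, ZMod.val_lt]
    · simp [hord, ZMod.val_lt]
  have ψadd : ∀ s t, ψ (s + t) = ψ s * ψ t := by
    intro s t
    simp only [hψ, ← pow_add, ZMod.val_add]
    have := pow_mod_orderOf g (s.val + t.val)
    rwa [hord] at this
  have ψL : ∀ x, ψ (L x) = x := hL
  have Lψ : ∀ t, L (ψ t) = t := fun t => ψinj (ψL _)
  have ψ0 : ψ 0 = 1 := by simp [hψ]
  set φ : ZMod (p - 1) → ZMod p := fun t => (ψ t : ZMod p) with hφ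
  have φinj : Function.Injective φ := fun s t h => ψinj (Units.ext h)
  have φne : ∀ t, φ t ≠ 0 := fun t => (ψ t).ne_zero
  have φadd : ∀ s t, φ (s + t) = φ s * φ t := fun s t => by simp [hφ, ψadd]
  have φ0 : φ 0 = 1 := by simp [hφ, ψ0]
  have h2 : (2 : ZMod p) ≠ 0 := by
    intro h
    have : ((2 : ℕ) : ZMod p) = 0 := by exact_mod_cast h
    rw [ZMod.natCast_eq_zero_iff] at this
    have h3 := Nat.le_of_dvd (by norm_num) this
    omega
  have mem0 : ∀ u v, s(u, v) ∈ C0A ↔ u ≠ v ∧ φ u + φ v = 1 := by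
    intro u v
    rw [hC0A]
    constructor
    · rintro ⟨x, y, he, hx, hy, hx2, hy2, hxy⟩
      have main : L x ≠ L y ∧ φ (L x) + φ (L y) = 1 := by
        refine ⟨fun h => hx2 ?_, by simpa [hφ, ψL] using hxy⟩
        have : x = y := by rw [← ψL x, h, ψL]
        subst this
        field_simp
        linear_combination hxy
      rw [Sym2.eq_iff] at he
      rcases he with ⟨rfl, rfl⟩ | ⟨rfl, rfl⟩
      · exact main
      · exact ⟨main.1.symm, by rw [add_comm]; exact main.2⟩
    · rintro ⟨hne, h⟩
      have half : ∀ x y : ZMod p, x + y = 1 → x = 2⁻¹ → x = y := by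
        rintro x y hxy rfl
        have : y = 1 - 2⁻¹ := eq_sub_of_add_eq' hxy
        rw [this]; field_simp; norm_num
      refine ⟨ψ u, ψ v, by simp [Lψ], ?_, ?_, ?_, ?_, h⟩
      · intro h1
        apply φne v
        have : φ u = 1 := by simp [hφ, h1]
        linear_combination h - this
      · intro h1
        apply φne u
        have : φ v = 1 := by simp [hφ, h1]
        linear_combination h - this
      · exact fun h1 => hne (φinj (half _ _ h h1))
      · exact fun h1 => hne (φinj (half _ _ ((add_comm _ _).trans h) h1)).symm
  have memS : ∀ a u v, s(u, v) ∈ shiftSet a C0A → u ≠ v ∧ φ u + φ v = φ a := by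
    intro a u v h
    obtain ⟨e, he, heq⟩ := h
    induction e with
    | _ x y =>
      rw [mem0] at he
      rw [Sym2.map_mk, Sym2.eq_iff] at heq
      rcases heq with ⟨rfl, rfl⟩ | ⟨rfl, rfl⟩
      · refine ⟨fun h => he.1 (add_right_cancel h), ?_⟩
        rw [φadd, φadd, ← add_mul, he.2, one_mul]
      · refine ⟨fun h => he.1 (add_right_cancel h).symm, ?_⟩
        rw [φadd, φadd, ← add_mul, add_comm (φ y), he.2, one_mul]
  refine ⟨⟨?_, ?_, ?_, ?_⟩, ?_⟩
  · have hsurj : ∀ x : ZMod p, x ≠ 0 → ∃ t, φ t = x := fun x hx =>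
      ⟨L (Units.mk0 x hx), by simp [hφ, ψL]⟩
    have hM : ∀ x : ZMod p, ∃ t, x ≠ 0 → φ t = x := fun x => by
      by_cases hx : x = 0
      · exact ⟨0, fun h => absurd hx h⟩
      · obtain ⟨t, ht⟩ := hsurj x hx
        exact ⟨t, fun _ => ht⟩
    choose M hM using hM
    have cne : ∀ k : ℕ, 0 < k → k < p → (k : ZMod p) ≠ 0 := by
      intro k h0 hk h
      rw [ZMod.natCast_eq_zero_iff] at h
      have := Nat.le_of_dvd h0 h
      omega
    have cinj : ∀ k j : ℕ, k < p → j < p → (k : ZMod p) = j → k = j := by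
      intro k j hk hj h
      have := congrArg ZMod.val h
      rwa [ZMod.val_natCast_of_lt hk, ZMod.val_natCast_of_lt hj] at this
    have sumc : ∀ k : ℕ, k < p → (k : ZMod p) + ((p + 1 - k : ℕ) : ZMod p) = 1 := by
      intro k hk
      rw [← Nat.cast_add, show k + (p + 1 - k) = p + 1 by omega]
      simp
    have himg : C0A = (fun k : ℕ => s(M (k : ZMod p), M ((p + 1 - k : ℕ) : ZMod p))) ''
        (Finset.Icc 2 ((p - 1) / 2) : Finset ℕ) := by
      ext e
      constructor
      · induction e with
        | _ u v =>
          intro h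
          rw [mem0] at h
          have huv : ∀ u v, φ u + φ v = 1 → (φ u).val + (φ v).val = p + 1 ∧
              2 ≤ (φ u).val ∧ M ((φ u).val : ZMod p) = u ∧ M ((φ v).val : ZMod p) = v := by
            intro u v h
            have l1 := ZMod.val_lt (φ u)
            have l2 := ZMod.val_lt (φ v)
            have n1 : (φ u).val ≠ 0 := by rw [Ne, ZMod.val_eq_zero]; exact φne u
            have n2 : (φ v).val ≠ 0 := by rw [Ne, ZMod.val_eq_zero]; exact φne v
            have hs : (((φ u).val + (φ v).val - 1 : ℕ) : ZMod p) = 0 := by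
              rw [Nat.cast_sub (by omega)]; simp [h]
            have hs1 : (φ u).val + (φ v).val = p + 1 := by
              by_contra hc
              rw [ZMod.natCast_eq_zero_iff] at hs
              obtain ⟨k, hk⟩ := hs
              have : k < 2 := by
                by_contra hk2
                have : p * 2 ≤ p * k := Nat.mul_le_mul_left _ (by omega)
                omega
              interval_cases k <;> omega
            refine ⟨hs1, by omega, φinj ?_, φinj ?_⟩
            · rw [ZMod.natCast_zmod_val, hM _ (φne u)]
            · rw [ZMod.natCast_zmod_val, hM _ (φne v)]
          obtain ⟨h1, h3, h4, h5⟩ := huv u v h.2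
          obtain ⟨h1', h3', h4', h5'⟩ := huv v u ((add_comm _ _).trans h.2)
          have hne : (φ u).val ≠ (φ v).val := fun hh => h.1 (φinj (ZMod.val_injective p hh))
          rcases lt_or_gt_of_ne hne with hl | hl
          · refine ⟨(φ u).val, by simp; omega, ?_⟩
            simp only
            rw [show p + 1 - (φ u).val = (φ v).val by omega, h4, h5]
          · refine ⟨(φ v).val, by simp; omega, ?_⟩
            simp only
            rw [show p + 1 - (φ v).val = (φ u).val by omega, h4, h5, Sym2.eq_swap]
      · rintro ⟨k, hk, rfl⟩
        simp only [Finset.coe_Icc, Set.mem_Icc] at hk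
        have m1 := hM _ (cne k (by omega) (by omega))
        have m2 := hM _ (cne (p + 1 - k) (by omega) (by omega))
        simp only
        rw [mem0, m1, m2]
        refine ⟨fun h => ?_, sumc k (by omega)⟩
        have := cinj k (p + 1 - k) (by omega) (by omega) (by rw [← m1, h, m2])
        omega
    rw [himg, Set.ncard_image_of_injOn, Set.ncard_coe_finset, Nat.card_Icc]
    · omega
    · intro k hk j hj h
      simp only [Finset.coe_Icc, Set.mem_Icc] at hk hj
      simp only [Sym2.eq_iff] at h
      have m1 := hM _ (cne k (by omega) (by omega))
      have m3 := hM _ (cne j (by omega) (by omega))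
      have m4 := hM _ (cne (p + 1 - j) (by omega) (by omega))
      rcases h with ⟨h, -⟩ | ⟨h, -⟩
      · exact cinj k j (by omega) (by omega) (by rw [← m1, h, m3])
      · have := cinj k (p + 1 - j) (by omega) (by omega) (by rw [← m1, h, m4])
        omega
  · intro e he
    induction e with
    | _ u v =>
      rw [mem0] at he
      simpa using he.1
  · intro e he h0
    obtain ⟨v, rfl⟩ := h0
    rw [mem0, φ0] at he
    exact φne v (by simpa using he.2)
  · intro e he e' he' hne a ha ha'
    obtain ⟨v, rfl⟩ := ha
    obtain ⟨v', rfl⟩ := ha'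
    rw [mem0] at he he'
    apply hne
    have : v = v' := φinj (add_left_cancel (he.2.trans he'.2.symm))
    rw [this]
  · intro a b hab
    refine ⟨?_, aux_graph hodd _ φ φinj φne a b hab ?_⟩
    · ext e
      simp only [Set.mem_inter_iff, Set.mem_empty_iff_false, iff_false]
      rintro ⟨h1, h2⟩
      induction e with
      | _ u v => exact hab (φinj ((memS _ _ _ h1).2.symm.trans (memS _ _ _ h2).2))
    · intro u v h
      rw [SimpleGraph.fromEdgeSet_adj] at h
      refine ⟨h.2, ?_⟩
      rcases h.1 with h1 | h1
      · exact Or.inl (memS _ _ _ h1).2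
      · exact Or.inr (memS _ _ _ h1).2
end
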